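/- arXiv:1103.1715 — 2 statements merged into one kernel-verified Lean document; each statement's English description precedes it below -/
import Mathlib

section
/- Let 0 < α ≤ 1 and λ > (3n + 2α)/n. Then there exists a constant C > 0, independent of f and σ, such that for every f ∈ L¹(ℝⁿ) and every σ > 0, |{x ∈ ℝⁿ : g*_{λ,α}(f)(x) > σ}| ≤ (C/σ) ∫_{ℝⁿ} |f(x)| dx. -/
/-!
The proof compares `g*` with a discrete square function and then runs a Calderón–Zygmund argument.

On the Whitney box `Q × [ℓ(Q), 2ℓ(Q))` over a dyadic cube `Q` of side `2ᵏ`, the supremum defining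
`A_α f` is at most twice the pairing `|∫ ψ_Q f|` with one suitably chosen bump `ψ_Q` (`exists_bump`),
while the weight of `g*`, whose exponent `λ n` exceeds `3n`, is at most a constant times `w_Q(x)²`,
where `w_Q(x) = (2ᵏ / (2ᵏ + |x - x_Q|))^(3n/2)`. Hence `g*(x)² ≤ C ∑_Q w_Q(x)² |∫ ψ_Q f|²`
(`lt_gstar`), and it remains to prove a weak type bound for the right-hand side with constants that
do not depend on the choice of the bumps.

* In `L²`, bumps at scales `2ʲ` and `2ᵏ` are almost orthogonal, with a gain exponential in
  `|j - k|` coming from cancellation and Hölder continuity. Schur's test turns this into the Bessel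
  inequality `∑_Q |Q| |∫ ψ_Q g|² ≤ C ∫ g²` (`tsum_bessel`), and `∫ w_Q² ≤ C |Q|`.
* For a mean-zero `b` supported in a dyadic cube `Q₀`, the sum `∑_Q |∫ ψ_Q b| w_Q` has integral
  at most `C ‖b‖₁` off a dilate of `Q₀` (`tsum_bad_le`): at scales coarser than `ℓ(Q₀)` the
  cancellation of `b` against the smoothness of `ψ_Q` helps, and at finer scales `ψ_Q` only sees
  cubes near `Q₀`, where `w_Q` is small away from `Q₀`. The square function is bounded by this
  `ℓ¹` sum.

These are combined by a Calderón–Zygmund decomposition of `f` at height `s` (`exists_cz`). The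
stopping cubes have side at least `2ᵐ` and cover the whole space, so `f` equals its mean plus a
mean-zero function on every cube and no differentiation theorem is needed. A cube of the smallest
side `2ᵐ` might carry little mass of `f`, but it needs no exceptional dilate, because only scales at
least `2ᵐ` of the square function are considered (`weak_trunc`). The bounds do not depend on `m`,
and `m → -∞` gives the estimate for all scales (`weak_discrete`).
-/

open MeasureTheory Metric Set

noncomputable section

/-- `ℝⁿ` as a Euclidean space. -/
abbrev Rn (n : ℕ) := EuclideanSpace ℝ (Fin n)

/-- The family `𝒞_α` of real functions supported in the closed unit ball, with vanishing
integral, satisfying the Hölder condition `|φ x - φ x'| ≤ |x - x'|^α`. -/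
def Calpha (n : ℕ) (α : ℝ) : Set (Rn n → ℝ) :=
  {φ | (∀ x : Rn n, 1 < ‖x‖ → φ x = 0) ∧ ((∫ x, φ x) = 0) ∧
    ∀ x x' : Rn n, |φ x - φ x'| ≤ ‖x - x'‖ ^ α}

/-- `A_α(f)(y,t) = sup_{φ ∈ 𝒞_α} |(f * φ_t)(y)|`, where `φ_t(x) = t⁻ⁿ φ(x/t)`. -/
def Aalpha {n : ℕ} (α : ℝ) (f : Rn n → ℝ) (y : Rn n) (t : ℝ) : ℝ :=
  ⨆ φ ∈ Calpha n α, |∫ z, (t ^ n)⁻¹ * φ (t⁻¹ • (y - z)) * f z|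

/-- The intrinsic square function `S_{α,β}` of aperture `β`. -/
def Salpha {n : ℕ} (α β : ℝ) (f : Rn n → ℝ) (x : Rn n) : ℝ :=
  Real.sqrt (∫ p in {p : Rn n × ℝ | 0 < p.2 ∧ dist x p.1 < β * p.2},
    Aalpha α f p.1 p.2 ^ 2 / p.2 ^ (n + 1))

/-- The intrinsic `g^*_λ` function. -/
def gstarAlpha {n : ℕ} (α lam : ℝ) (f : Rn n → ℝ) (x : Rn n) : ℝ :=
  Real.sqrt (∫ p in {p : Rn n × ℝ | 0 < p.2},
    (p.2 / (p.2 + dist x p.1)) ^ (lam * n) * Aalpha α f p.1 p.2 ^ 2 / p.2 ^ (n + 1))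

/-- The intrinsic Littlewood–Paley `g`-function. -/
def gAlpha {n : ℕ} (α : ℝ) (f : Rn n → ℝ) (x : Rn n) : ℝ :=
  Real.sqrt (∫ t in Ioi (0 : ℝ), Aalpha α f x t ^ 2 / t)

/-- The commutator kernel
`sup_{φ ∈ 𝒞_α} |∫ (b x - b z) φ_t (y - z) f z dz|`. -/
def commAalpha {n : ℕ} (α : ℝ) (b f : Rn n → ℝ) (x y : Rn n) (t : ℝ) : ℝ :=
  ⨆ φ ∈ Calpha n α, |∫ z, (b x - b z) * ((t ^ n)⁻¹ * φ (t⁻¹ • (y - z))) * f z|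

/-- The commutator `[b, S_α]`. -/
def commS {n : ℕ} (α : ℝ) (b f : Rn n → ℝ) (x : Rn n) : ℝ :=
  Real.sqrt (∫ p in {p : Rn n × ℝ | 0 < p.2 ∧ dist x p.1 < p.2},
    commAalpha α b f x p.1 p.2 ^ 2 / p.2 ^ (n + 1))

/-- The commutator `[b, g^*_{λ,α}]`. -/
def commGstar {n : ℕ} (α lam : ℝ) (b f : Rn n → ℝ) (x : Rn n) : ℝ :=
  Real.sqrt (∫ p in {p : Rn n × ℝ | 0 < p.2},
    (p.2 / (p.2 + dist x p.1)) ^ (lam * n) * commAalpha α b f x p.1 p.2 ^ 2 / p.2 ^ (n + 1))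

/-- The commutator `[b, g_α]`. -/
def commG {n : ℕ} (α : ℝ) (b f : Rn n → ℝ) (x : Rn n) : ℝ :=
  Real.sqrt (∫ t in Ioi (0 : ℝ), commAalpha α b f x x t ^ 2 / t)

/-- `A` is an admissible constant for `f` in the generalized Morrey space `L^{p,Φ}`:
`∫_{B(x₀,r)} |f|^p ≤ A^p Φ(r)` for all balls.  The Morrey norm `‖f‖_{L^{p,Φ}}` is the least
such `A ≥ 0`, and `f ∈ L^{p,Φ}` iff some such `A` exists. -/
def MorreyBound {n : ℕ} (p : ℝ) (Φ : ℝ → ℝ) (f : Rn n → ℝ) (A : ℝ) : Prop :=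
  ∀ (x₀ : Rn n) (r : ℝ), 0 < r → (∫ x in ball x₀ r, |f x| ^ p) ≤ A ^ p * Φ r

/-- `A` is an admissible constant for `g` in the weak space `WL^{1,Φ}`:
`σ |{x ∈ B(x₀,r) : g x > σ}| ≤ A Φ(r)` for all balls and all `σ > 0`. -/
def WeakMorreyBound {n : ℕ} (Φ : ℝ → ℝ) (g : Rn n → ℝ) (A : ℝ) : Prop :=
  ∀ (x₀ : Rn n) (r : ℝ), 0 < r → ∀ σ : ℝ, 0 < σ →
    σ * (volume {x ∈ ball x₀ r | σ < g x}).toReal ≤ A * Φ r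

/-- Average of `b` over the ball `B(x₀,r)`. -/
def ballAvg {n : ℕ} (b : Rn n → ℝ) (x₀ : Rn n) (r : ℝ) : ℝ :=
  (volume (ball x₀ r)).toReal⁻¹ * ∫ y in ball x₀ r, b y

/-- `b ∈ BMO(ℝⁿ)`. -/
def IsBMO {n : ℕ} (b : Rn n → ℝ) : Prop :=
  LocallyIntegrable b volume ∧ ∃ K : ℝ, ∀ (x₀ : Rn n) (r : ℝ), 0 < r →
    (∫ x in ball x₀ r, |b x - ballAvg b x₀ r|) ≤ K * (volume (ball x₀ r)).toReal

/-- The Hardy–Littlewood maximal function. -/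
def hlMaximal {n : ℕ} (g : Rn n → ℝ) (x : Rn n) : ℝ :=
  ⨆ (x₀ : Rn n) (r : ℝ), ⨆ (_ : 0 < r ∧ x ∈ ball x₀ r),
    (volume (ball x₀ r)).toReal⁻¹ * ∫ y in ball x₀ r, |g y|

/-! ### Dyadic geometry -/

/-- The lattice point `2ᵏ m`: the lower corner of the dyadic cube of side `2ᵏ` and index `m`. -/
def pt {n : ℕ} (k : ℤ) (m : Fin n → ℤ) : Rn n :=
  WithLp.toLp 2 (fun i => (m i : ℝ) * (2 : ℝ) ^ k)

/-- The index of the dyadic cube of side `2ᵏ` containing `x`. -/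
def idx {n : ℕ} (k : ℤ) (x : Rn n) : Fin n → ℤ := fun i => ⌊x i / (2 : ℝ) ^ k⌋

/-- The half-open dyadic cube of side `2^q.1` and index `q.2`. -/
def cell {n : ℕ} (q : ℤ × (Fin n → ℤ)) : Set (Rn n) := {x | idx q.1 x = q.2}

theorem two_zpow_pos (k : ℤ) : (0 : ℝ) < (2 : ℝ) ^ k := by positivity

theorem norm_le_of_coord {n : ℕ} {x : Rn n} {r : ℝ} (h : ∀ i, |x i| ≤ r) :
    ‖x‖ ≤ n * r := by
  rcases Nat.eq_zero_or_pos n with h0 | h0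
  · subst h0
    simp [Subsingleton.elim x 0]
  have hr : 0 ≤ r := (abs_nonneg _).trans (h ⟨0, h0⟩)
  have hn : (1 : ℝ) ≤ n := by exact_mod_cast h0
  rw [EuclideanSpace.norm_eq]
  apply Real.sqrt_le_iff.2
  refine ⟨by positivity, ?_⟩
  calc ∑ i, ‖x i‖ ^ 2 ≤ ∑ _i : Fin n, r ^ 2 := by
        apply Finset.sum_le_sum
        intro i _
        have := h i
        rw [Real.norm_eq_abs]
        gcongr
    _ = n * r ^ 2 := by simp
    _ ≤ (n * r) ^ 2 := by
        rw [mul_pow]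
        gcongr
        nlinarith

theorem dist_pt_le {n : ℕ} {q : ℤ × (Fin n → ℤ)} {x : Rn n} (hx : x ∈ cell q) :
    dist x (pt q.1 q.2) ≤ n * (2 : ℝ) ^ q.1 := by
  rw [dist_eq_norm]
  apply norm_le_of_coord
  intro i
  have h : ⌊x i / (2 : ℝ) ^ q.1⌋ = q.2 i := congrFun hx i
  have hT := two_zpow_pos q.1
  rw [Int.floor_eq_iff, le_div_iff₀ hT, div_lt_iff₀ hT] at h
  have : (x - pt q.1 q.2) i = x i - q.2 i * (2 : ℝ) ^ q.1 := rfl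
  rw [this, abs_le]
  constructor <;> nlinarith [h.1, h.2]

theorem measurable_idx {n : ℕ} (k : ℤ) : Measurable (idx k : Rn n → Fin n → ℤ) := by
  apply measurable_pi_lambda
  intro i
  apply Int.measurable_floor.comp
  apply Measurable.div_const
  fun_prop

theorem measurableSet_cell {n : ℕ} (q : ℤ × (Fin n → ℤ)) : MeasurableSet (cell q) :=
  measurable_idx q.1 (measurableSet_singleton q.2)

theorem idx_succ {n : ℕ} {k : ℤ} {x y : Rn n} (h : idx k x = idx k y) :
    idx (k + 1) x = idx (k + 1) y := by
  have key : ∀ z : Rn n, ∀ i, idx (k + 1) z i = idx k z i / 2 := by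
    intro z i
    have := Int.floor_div_natCast (z i / (2 : ℝ) ^ k) 2
    simp only [idx]
    rw [zpow_add₀ two_ne_zero, ← div_div]
    simpa using this
  funext i
  rw [key, key, h]

theorem idx_mono {n : ℕ} {k l : ℤ} (hkl : k ≤ l) {x y : Rn n} (h : idx k x = idx k y) :
    idx l x = idx l y := by
  induction l, hkl using Int.leInduction with
  | base => exact h
  | succ l _ ih => exact idx_succ ih

theorem volume_cell {n : ℕ} (q : ℤ × (Fin n → ℤ)) :
    volume (cell q) = ENNReal.ofReal (((2 : ℝ) ^ q.1) ^ n) := by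
  have hT := two_zpow_pos q.1
  have h := (PiLp.volume_preserving_toLp (Fin n)).measure_preimage
    (measurableSet_cell q).nullMeasurableSet
  rw [← h]
  have : (WithLp.toLp 2 : (Fin n → ℝ) → Rn n) ⁻¹' cell q =
      Set.pi univ fun i => Ico ((q.2 i : ℝ) * 2 ^ q.1) (((q.2 i : ℝ) + 1) * 2 ^ q.1) := by
    ext v
    simp only [mem_preimage, cell, mem_ofPred_eq, Set.mem_pi, mem_univ, true_imp_iff, mem_Ico]
    rw [funext_iff]
    apply forall_congr'
    intro i
    simp only [idx]
    rw [Int.floor_eq_iff, le_div_iff₀ hT, div_lt_iff₀ hT]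
  rw [this, Real.volume_pi_Ico]
  have : ∀ i, ((q.2 i : ℝ) + 1) * 2 ^ q.1 - (q.2 i : ℝ) * 2 ^ q.1 = 2 ^ q.1 := by
    intro i; ring
  simp [this, ENNReal.ofReal_pow hT.le]

theorem volume_closedBall_le {n : ℕ} (x : Rn n) {r : ℝ} (hr : 0 ≤ r) :
    volume (closedBall x r) = ENNReal.ofReal (r ^ n) * volume (ball (0 : Rn n) 1) := by
  rw [Measure.addHaar_closedBall _ _ hr]
  simp

/-- Each point lies within distance `R 2ᵏ` of boundedly many lattice points `2ᵏ m`, so the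
corresponding balls have bounded overlap. -/
theorem tsum_overlap {n : ℕ} (R : ℕ) (k : ℤ) (z : Rn n) :
    ∑' m : Fin n → ℤ, (closedBall (pt k m) (R * (2 : ℝ) ^ k)).indicator
      (fun _ => (1 : ENNReal)) z ≤ ((2 * R + 1 : ℕ) ^ n : ℕ) := by
  have hT := two_zpow_pos k
  set S : Finset (Fin n → ℤ) := Fintype.piFinset fun i =>
    Finset.Icc ⌈z i / (2 : ℝ) ^ k - R⌉ ⌊z i / (2 : ℝ) ^ k + R⌋ with hS
  have hout : ∀ m ∉ S, (closedBall (pt k m) (R * (2 : ℝ) ^ k)).indicator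
      (fun _ => (1 : ENNReal)) z = 0 := by
    intro m hm
    apply indicator_of_notMem
    intro hz
    apply hm
    rw [hS, Fintype.mem_piFinset]
    intro i
    have h1 : |z i - m i * (2 : ℝ) ^ k| ≤ R * (2 : ℝ) ^ k := by
      have := PiLp.norm_apply_le (z - pt k m) i
      rw [mem_closedBall, dist_eq_norm] at hz
      exact this.trans hz
    rw [abs_le] at h1
    rw [Finset.mem_Icc, Int.ceil_le, Int.le_floor, sub_le_iff_le_add, div_le_iff₀ hT,
      ← sub_le_iff_le_add, le_div_iff₀ hT]
    constructor <;> nlinarith [h1.1, h1.2]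
  rw [tsum_eq_sum hout]
  calc _ ≤ ∑ m ∈ S, (1 : ENNReal) := by
        apply Finset.sum_le_sum
        intro m _
        exact indicator_le_self' (by simp) z
    _ = (S.card : ENNReal) := by simp
    _ ≤ _ := by
        norm_cast
        rw [hS, Fintype.card_piFinset]
        calc _ ≤ ∏ _i : Fin n, (2 * R + 1) := by
              apply Finset.prod_le_prod'
              intro i _
              rw [Int.card_Icc, Int.ceil_sub_natCast, Int.floor_add_natCast]
              have := Int.floor_le_ceil (z i / (2 : ℝ) ^ k)
              lia
          _ = _ := by simp

theorem tsum_lintegral_overlap {n : ℕ} (R : ℕ) (k : ℤ) {h : Rn n → ENNReal}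
    (hh : AEMeasurable h) :
    ∑' m : Fin n → ℤ, ∫⁻ z, (closedBall (pt k m) (R * (2 : ℝ) ^ k)).indicator
      (fun _ => (1 : ENNReal)) z * h z ≤ ((2 * R + 1 : ℕ) ^ n : ℕ) * ∫⁻ z, h z := by
  rw [← lintegral_tsum, ← lintegral_const_mul' _ _ (ENNReal.natCast_ne_top _)]
  · apply lintegral_mono
    intro z
    dsimp only
    rw [ENNReal.tsum_mul_right]
    gcongr
    exact tsum_overlap R k z
  · intro m
    exact ((measurable_const.indicator isClosed_closedBall.measurableSet).aemeasurable).mul hh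

/-! ### Bumps adapted to a dyadic scale -/

/-- `ψ` is a bump at scale `2ᵏ` about `y`: mean zero, supported in the closed ball of radius
`(n + 2) 2ᵏ` about `y`, and `α`-Hölder with the `L¹`-normalised constant. The radius is large
enough for `z ↦ φ_t(y' - z)` with `φ ∈ 𝒞_α` to be a bump about the lower corner of the cube of
side `2ᵏ` containing `y'` whenever `2ᵏ ≤ t < 2ᵏ⁺¹`. -/
structure IsBump {n : ℕ} (α : ℝ) (k : ℤ) (y : Rn n) (ψ : Rn n → ℝ) : Prop where
  supp : ∀ z, (n + 2) * (2 : ℝ) ^ k < dist z y → ψ z = 0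
  mean : ∫ z, ψ z = 0
  holder : ∀ z z', |ψ z - ψ z'| ≤ (((2 : ℝ) ^ k) ^ n)⁻¹ * (dist z z' / (2 : ℝ) ^ k) ^ α

theorem IsBump.continuous {n : ℕ} {α : ℝ} (hα : 0 < α) {k : ℤ} {y : Rn n} {ψ : Rn n → ℝ}
    (h : IsBump α k y ψ) : Continuous ψ := by
  rw [continuous_iff_continuousAt]
  intro z
  rw [ContinuousAt, tendsto_iff_norm_sub_tendsto_zero]
  have hlim : Filter.Tendsto (fun z' => (((2 : ℝ) ^ k) ^ n)⁻¹ * (dist z' z / (2 : ℝ) ^ k) ^ α)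
      (nhds z) (nhds 0) := by
    have : Continuous (fun z' => (((2 : ℝ) ^ k) ^ n)⁻¹ * (dist z' z / (2 : ℝ) ^ k) ^ α) := by
      apply Continuous.mul continuous_const
      apply Continuous.rpow_const
      · fun_prop
      · intro _; right; exact hα.le
    have h2 := this.tendsto z
    simpa [Real.zero_rpow hα.ne'] using h2
  exact squeeze_zero (fun _ => norm_nonneg _) (fun z' => h.holder z' z) hlim

theorem IsBump.abs_le {n : ℕ} (hn : 0 < n) {α : ℝ} (hα : 0 < α) (hα1 : α ≤ 1) {k : ℤ}
    {y : Rn n} {ψ : Rn n → ℝ} (h : IsBump α k y ψ) (z : Rn n) :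
    |ψ z| ≤ 3 * (n + 2) * (((2 : ℝ) ^ k) ^ n)⁻¹ := by
  have hT := two_zpow_pos k
  by_cases hz : (n + 2) * (2 : ℝ) ^ k < dist z y
  · rw [h.supp z hz, abs_zero]; positivity
  push Not at hz
  -- compare with a point of the complement of the support at distance at most `3 (n + 2) 2ᵏ`
  let e : Rn n := EuclideanSpace.single ⟨0, hn⟩ 1
  have he : ‖e‖ = 1 := by simp [e]
  let z' := y + (2 * (n + 2) * (2 : ℝ) ^ k) • e
  have hz' : dist z' y = 2 * (n + 2) * (2 : ℝ) ^ k := by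
    simp only [z', dist_eq_norm, add_sub_cancel_left, norm_smul, he, mul_one, Real.norm_eq_abs]
    apply abs_of_nonneg; positivity
  have h0 : ψ z' = 0 := by
    apply h.supp
    rw [hz']
    nlinarith [mul_pos (show (0 : ℝ) < n + 2 by positivity) hT]
  have h1 := h.holder z z'
  rw [h0, sub_zero] at h1
  refine h1.trans ?_
  rw [mul_comm]
  gcongr
  have hd : dist z z' / (2 : ℝ) ^ k ≤ 3 * (n + 2) := by
    rw [div_le_iff₀ hT]
    have := dist_triangle_right z z' y
    rw [hz'] at this
    linarith
  calc (dist z z' / (2 : ℝ) ^ k) ^ α ≤ (3 * (n + 2) : ℝ) ^ α := by gcongr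
    _ ≤ (3 * (n + 2) : ℝ) ^ (1 : ℝ) := by
        apply Real.rpow_le_rpow_of_exponent_le _ hα1
        have : (0 : ℝ) ≤ n := by positivity
        linarith
    _ = _ := Real.rpow_one _

theorem IsBump.hasCompactSupport {n : ℕ} {α : ℝ} {k : ℤ} {y : Rn n} {ψ : Rn n → ℝ}
    (h : IsBump α k y ψ) : HasCompactSupport ψ := by
  apply HasCompactSupport.intro (isCompact_closedBall y ((n + 2) * (2 : ℝ) ^ k))
  intro z hz
  apply h.supp
  simpa using hz

theorem IsBump.integrable {n : ℕ} {α : ℝ} (hα : 0 < α) {k : ℤ} {y : Rn n} {ψ : Rn n → ℝ}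
    (h : IsBump α k y ψ) : Integrable ψ :=
  (h.continuous hα).integrable_of_hasCompactSupport h.hasCompactSupport

theorem IsBump.integrable_mul {n : ℕ} (hn : 0 < n) {α : ℝ} (hα : 0 < α) (hα1 : α ≤ 1) {k : ℤ}
    {y : Rn n} {ψ f : Rn n → ℝ} (h : IsBump α k y ψ) (hf : Integrable f) :
    Integrable (fun z => ψ z * f z) := by
  apply hf.bdd_mul (h.continuous hα).aestronglyMeasurable
  exact Filter.Eventually.of_forall fun z => h.abs_le hn hα hα1 z

theorem isBump_zero {n : ℕ} {α : ℝ} {k : ℤ} {y : Rn n} : IsBump α k y (fun _ => 0) where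
  supp := by simp
  mean := by simp
  holder := by
    intro z z'
    have := two_zpow_pos k
    simp only [sub_self, abs_zero]
    positivity

theorem ofReal_abs_eq (x : ℝ) : ENNReal.ofReal |x| = ‖x‖ₑ := by
  rw [← Real.norm_eq_abs, ofReal_norm]

/-- Pairing of all bumps of one scale with a function: no cancellation used. -/
theorem tsum_pair_small {n : ℕ} (hn : 0 < n) {α : ℝ} (hα : 0 < α) (hα1 : α ≤ 1) {k : ℤ}
    {ψ : (Fin n → ℤ) → Rn n → ℝ} (hψ : ∀ m, IsBump α k (pt k m) (ψ m))
    {b : Rn n → ℝ} (hb : Integrable b) :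
    ∑' m, ‖∫ z, ψ m z * b z‖ₑ ≤ ((2 * (2 * (n + 2)) + 1 : ℕ) ^ n : ℕ) *
      (ENNReal.ofReal (3 * (n + 2) * (((2 : ℝ) ^ k) ^ n)⁻¹) * ∫⁻ z, ‖b z‖ₑ) := by
  have hT := two_zpow_pos k
  rw [← lintegral_const_mul' _ _ ENNReal.ofReal_ne_top]
  refine le_trans ?_ (tsum_lintegral_overlap _ k (hb.aestronglyMeasurable.enorm.const_mul _))
  apply ENNReal.tsum_le_tsum
  intro m
  refine (enorm_integral_le_lintegral_enorm _).trans ?_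
  apply lintegral_mono
  intro z
  dsimp only
  rw [enorm_mul]
  by_cases hz : z ∈ closedBall (pt k m) ((2 * (n + 2) : ℕ) * (2 : ℝ) ^ k)
  · rw [indicator_of_mem hz, one_mul]
    gcongr
    rw [← ofReal_abs_eq]
    exact ENNReal.ofReal_le_ofReal ((hψ m).abs_le hn hα hα1 z)
  · rw [(hψ m).supp z]
    · simp
    · rw [mem_closedBall, not_le] at hz
      refine lt_of_le_of_lt ?_ hz
      push_cast
      gcongr
      have : (0 : ℝ) ≤ n := by positivity
      linarith

/-- Pairing of all bumps of one scale with a mean-zero function living at a smaller scale: the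
Hölder regularity of the bumps gains the factor `(ρ / 2ᵏ)^α`. -/
theorem tsum_pair_cancel {n : ℕ} (hn : 0 < n) {α : ℝ} (hα : 0 < α) (hα1 : α ≤ 1) {k : ℤ}
    {ψ : (Fin n → ℤ) → Rn n → ℝ} (hψ : ∀ m, IsBump α k (pt k m) (ψ m))
    {b : Rn n → ℝ} (hb : Integrable b) (hb0 : ∫ z, b z = 0) {c : Rn n} {ρ : ℝ}
    (hρ : ρ ≤ (n + 2) * (2 : ℝ) ^ k) (hsupp : ∀ z, ρ < dist z c → b z = 0) :
    ∑' m, ‖∫ z, ψ m z * b z‖ₑ ≤ ((2 * (2 * (n + 2)) + 1 : ℕ) ^ n : ℕ) *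
      (ENNReal.ofReal ((((2 : ℝ) ^ k) ^ n)⁻¹ * (ρ / (2 : ℝ) ^ k) ^ α) * ∫⁻ z, ‖b z‖ₑ) := by
  have hT := two_zpow_pos k
  rw [← lintegral_const_mul' _ _ ENNReal.ofReal_ne_top]
  refine le_trans ?_ (tsum_lintegral_overlap _ k (hb.aestronglyMeasurable.enorm.const_mul _))
  apply ENNReal.tsum_le_tsum
  intro m
  have heq : ∫ z, ψ m z * b z = ∫ z, (ψ m z - ψ m c) * b z := by
    simp_rw [sub_mul]
    rw [integral_sub ((hψ m).integrable_mul hn hα hα1 hb) (hb.const_mul _),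
      integral_const_mul, hb0, mul_zero, sub_zero]
  rw [heq]
  refine (enorm_integral_le_lintegral_enorm _).trans ?_
  apply lintegral_mono
  intro z
  dsimp only
  rw [enorm_mul]
  by_cases hzc : ρ < dist z c
  · simp [hsupp z hzc]
  push Not at hzc
  by_cases hz : z ∈ closedBall (pt k m) ((2 * (n + 2) : ℕ) * (2 : ℝ) ^ k)
  · rw [indicator_of_mem hz, one_mul]
    gcongr
    rw [← ofReal_abs_eq]
    apply ENNReal.ofReal_le_ofReal
    refine ((hψ m).holder z c).trans ?_
    gcongr
  · rw [mem_closedBall, not_le] at hz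
    push_cast at hz
    have h1 : 0 ≤ (n + 2) * (2 : ℝ) ^ k := by positivity
    rw [(hψ m).supp z (by linarith), (hψ m).supp c]
    · simp
    · have := dist_triangle_left z (pt k m) c
      rw [dist_comm c z] at this
      linarith

/-- Pairing of all bumps of one scale with a single bump of a larger scale. -/
theorem tsum_pair_bump {n : ℕ} (hn : 0 < n) {α : ℝ} (hα : 0 < α) (hα1 : α ≤ 1) {k l : ℤ}
    (hkl : k ≤ l) {ψ : (Fin n → ℤ) → Rn n → ℝ} (hψ : ∀ m, IsBump α k (pt k m) (ψ m))
    {y : Rn n} {u : Rn n → ℝ} (hu : IsBump α l y u) :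
    ∑' m, ‖∫ z, ψ m z * u z‖ₑ ≤ ((2 * (2 * (n + 2)) + 1 : ℕ) ^ n : ℕ) *
      (ENNReal.ofReal (3 * (n + 2) * (((2 : ℝ) ^ k) ^ n)⁻¹ * ((((2 : ℝ) ^ l) ^ n)⁻¹ *
        ((n + 2) * (2 : ℝ) ^ k / (2 : ℝ) ^ l) ^ α)) *
        volume (closedBall y (2 * (n + 2) * (2 : ℝ) ^ l))) := by
  have hT := two_zpow_pos k
  have hT' := two_zpow_pos l
  have hTT : (2 : ℝ) ^ k ≤ (2 : ℝ) ^ l := zpow_le_zpow_right₀ one_le_two hkl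
  rw [← setLIntegral_const, ← lintegral_indicator isClosed_closedBall.measurableSet]
  refine le_trans ?_ (tsum_lintegral_overlap _ k
    (measurable_const.indicator isClosed_closedBall.measurableSet).aemeasurable)
  apply ENNReal.tsum_le_tsum
  intro m
  have heq : ∫ z, ψ m z * u z = ∫ z, ψ m z * (u z - u (pt k m)) := by
    simp_rw [mul_sub]
    rw [integral_sub ((hψ m).integrable_mul hn hα hα1 (hu.integrable hα))
      (((hψ m).integrable hα).mul_const _),
      integral_mul_const, (hψ m).mean, zero_mul, sub_zero]
  rw [heq]
  refine (enorm_integral_le_lintegral_enorm _).trans ?_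
  apply lintegral_mono
  intro z
  dsimp only
  have hpos : (n + 2) * (2 : ℝ) ^ k ≤ (n + 2) * (2 : ℝ) ^ l := by gcongr
  have h1 : 0 < (n + 2) * (2 : ℝ) ^ k := by positivity
  by_cases hzm : (n + 2) * (2 : ℝ) ^ k < dist z (pt k m)
  · simp [(hψ m).supp z hzm]
  push Not at hzm
  have hz : z ∈ closedBall (pt k m) ((2 * (n + 2) : ℕ) * (2 : ℝ) ^ k) := by
    rw [mem_closedBall]
    push_cast
    linarith
  rw [indicator_of_mem hz, one_mul]
  by_cases hzy : z ∈ closedBall y (2 * (n + 2) * (2 : ℝ) ^ l)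
  · rw [indicator_of_mem hzy, ← ofReal_abs_eq, abs_mul]
    apply ENNReal.ofReal_le_ofReal
    gcongr
    · exact (hψ m).abs_le hn hα hα1 z
    · refine (hu.holder _ _).trans ?_
      gcongr
  · rw [mem_closedBall, not_le] at hzy
    rw [hu.supp z (by linarith), hu.supp (pt k m)]
    · simp
    · have := dist_triangle z (pt k m) y
      linarith

/-! ### Almost orthogonality and the `L²` estimate -/

/-- The exponential decay `2^(-α|k|/4)` in the difference of two dyadic scales. -/
def dec (α : ℝ) (k : ℤ) : ENNReal := ENNReal.ofReal (((2 : ℝ) ^ (-(α / 4))) ^ k.natAbs)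

theorem tsum_dec_ne_top {α : ℝ} (hα : 0 < α) : ∑' k : ℤ, dec α k ≠ ⊤ := by
  have hr1 : (2 : ℝ) ^ (-(α / 4)) < 1 := by
    apply Real.rpow_lt_one_of_one_lt_of_neg one_lt_two; linarith
  have hs : Summable fun k : ℤ => ((2 : ℝ) ^ (-(α / 4))) ^ k.natAbs := by
    apply Summable.of_nat_of_neg <;>
      simpa using summable_geometric_of_lt_one (by positivity) hr1
  exact hs.tsum_ofReal_ne_top

theorem tsum_dec_sub (α : ℝ) (l : ℤ) : ∑' k : ℤ, dec α (k - l) = ∑' k : ℤ, dec α k :=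
  (Equiv.subRight l).tsum_eq (dec α)

theorem dec_sub_comm (α : ℝ) (k l : ℤ) : dec α (k - l) = dec α (l - k) := by
  unfold dec
  rw [← Int.natAbs_neg, neg_sub]

theorem ratio_le_dec {α β : ℝ} (hβ : α / 4 ≤ β) {k l : ℤ} (hkl : k ≤ l) :
    ENNReal.ofReal (((2 : ℝ) ^ k / (2 : ℝ) ^ l) ^ β) ≤ dec α (k - l) := by
  apply ENNReal.ofReal_le_ofReal
  have h1 : (2 : ℝ) ^ k / (2 : ℝ) ^ l = (2 : ℝ) ^ (-((k - l).natAbs : ℝ)) := by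
    rw [← zpow_sub₀ two_ne_zero, ← Real.rpow_intCast]
    congr 1
    have : ((k - l).natAbs : ℤ) = -(k - l) := by lia
    generalize (k - l).natAbs = N at this ⊢
    have h3 : k - l = -(N : ℤ) := by lia
    rw [h3]
    push_cast
    rfl
  rw [h1, ← Real.rpow_mul two_pos.le, ← Real.rpow_natCast, ← Real.rpow_mul two_pos.le]
  apply Real.rpow_le_rpow_of_exponent_le one_le_two
  have : (0 : ℝ) ≤ ((k - l).natAbs : ℝ) := by positivity
  nlinarith

theorem scaled_ratio_le {n : ℕ} {α : ℝ} (hα1 : α ≤ 1) (k l : ℤ) :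
    ((n + 2) * (2 : ℝ) ^ k / (2 : ℝ) ^ l) ^ α ≤ (n + 2) * ((2 : ℝ) ^ k / (2 : ℝ) ^ l) ^ α := by
  rw [mul_div_assoc, Real.mul_rpow (by positivity) (by positivity)]
  gcongr
  calc (n + 2 : ℝ) ^ α ≤ (n + 2 : ℝ) ^ (1 : ℝ) := by
        apply Real.rpow_le_rpow_of_exponent_le _ hα1
        have : (0 : ℝ) ≤ n := by positivity
        linarith
    _ = _ := Real.rpow_one _

theorem IsBump.lintegral_le {n : ℕ} (hn : 0 < n) {α : ℝ} (hα : 0 < α) (hα1 : α ≤ 1) {k : ℤ}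
    {y : Rn n} {ψ : Rn n → ℝ} (h : IsBump α k y ψ) :
    ∫⁻ z, ‖ψ z‖ₑ ≤ ENNReal.ofReal (3 * (n + 2) * (n + 2) ^ n) * volume (ball (0 : Rn n) 1) := by
  have hT := two_zpow_pos k
  calc ∫⁻ z, ‖ψ z‖ₑ ≤ ∫⁻ z, (closedBall y ((n + 2) * (2 : ℝ) ^ k)).indicator
        (fun _ => ENNReal.ofReal (3 * (n + 2) * (((2 : ℝ) ^ k) ^ n)⁻¹)) z := by
        apply lintegral_mono
        intro z
        by_cases hz : z ∈ closedBall y ((n + 2) * (2 : ℝ) ^ k)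
        · dsimp only
          rw [indicator_of_mem hz, ← ofReal_abs_eq]
          exact ENNReal.ofReal_le_ofReal (h.abs_le hn hα hα1 z)
        · dsimp only
          rw [h.supp z (by simpa using hz)]
          simp
    _ = ENNReal.ofReal (3 * (n + 2) * (((2 : ℝ) ^ k) ^ n)⁻¹) *
          (ENNReal.ofReal (((n + 2) * (2 : ℝ) ^ k) ^ n) * volume (ball (0 : Rn n) 1)) := by
        rw [lintegral_indicator isClosed_closedBall.measurableSet, setLIntegral_const,
          volume_closedBall_le _ (by positivity)]
    _ = _ := by
        rw [← mul_assoc, ← ENNReal.ofReal_mul (by positivity)]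
        congr 2
        rw [mul_pow]
        field_simp

theorem ofReal_mul_eq {A X a b c : ℝ} (hA : 0 ≤ A) (ha : 0 ≤ a) (hb : 0 ≤ b)
    (h : A * X = a * b * c) : ENNReal.ofReal A * ENNReal.ofReal X =
      ENNReal.ofReal a * ENNReal.ofReal b * ENNReal.ofReal c := by
  rw [← ENNReal.ofReal_mul hA, ← ENNReal.ofReal_mul ha, ← ENNReal.ofReal_mul (by positivity), h]

/-- The constant of the almost orthogonality estimate. -/
def orthC (n : ℕ) : ENNReal := ((2 * (2 * (n + 2)) + 1 : ℕ) ^ n : ℕ) *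
  (ENNReal.ofReal (3 * (n + 2) * (n + 2) * (2 * (n + 2)) ^ n) * volume (ball (0 : Rn n) 1))

theorem orthC_ne_top (n : ℕ) : orthC n ≠ ⊤ :=
  ENNReal.mul_ne_top (ENNReal.natCast_ne_top _)
    (ENNReal.mul_ne_top ENNReal.ofReal_ne_top measure_ball_lt_top.ne)

/-- Almost orthogonality: the `L¹`-normalised bumps of scale `2ᵏ`, weighted by the volumes of
their cubes, pair with a bump of scale `2ˡ` with a gain exponential in `|k - l|`. -/
theorem tsum_gram_row {n : ℕ} (hn : 0 < n) {α : ℝ} (hα : 0 < α) (hα1 : α ≤ 1) {k l : ℤ}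
    {ψ : (Fin n → ℤ) → Rn n → ℝ} (hψ : ∀ m, IsBump α k (pt k m) (ψ m))
    {y : Rn n} {u : Rn n → ℝ} (hu : IsBump α l y u) :
    ENNReal.ofReal (((2 : ℝ) ^ k) ^ n) * ∑' m, ‖∫ z, ψ m z * u z‖ₑ ≤
      orthC n * dec α (k - l) := by
  have hT := two_zpow_pos k
  have hT' := two_zpow_pos l
  have hα4 : α / 4 ≤ α := by linarith
  rcases le_total k l with hkl | hkl
  · calc _ ≤ ENNReal.ofReal (((2 : ℝ) ^ k) ^ n) * (((2 * (2 * (n + 2)) + 1 : ℕ) ^ n : ℕ) *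
          (ENNReal.ofReal (3 * (n + 2) * (((2 : ℝ) ^ k) ^ n)⁻¹ * ((((2 : ℝ) ^ l) ^ n)⁻¹ *
          ((n + 2) * ((2 : ℝ) ^ k / (2 : ℝ) ^ l) ^ α))) *
          (ENNReal.ofReal ((2 * (n + 2) * (2 : ℝ) ^ l) ^ n) * volume (ball (0 : Rn n) 1)))) := by
          rw [← volume_closedBall_le y (by positivity)]
          refine mul_le_mul_right ((tsum_pair_bump hn hα hα1 hkl hψ hu).trans ?_) _
          gcongr
          exact scaled_ratio_le hα1 k l
      _ = orthC n * ENNReal.ofReal (((2 : ℝ) ^ k / (2 : ℝ) ^ l) ^ α) := by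
          have e : (3 * (n + 2) * (n + 2) * (2 * (n + 2)) ^ n : ℝ) *
              ((2 : ℝ) ^ k / (2 : ℝ) ^ l) ^ α = ((2 : ℝ) ^ k) ^ n * (3 * (n + 2) *
              (((2 : ℝ) ^ k) ^ n)⁻¹ * ((((2 : ℝ) ^ l) ^ n)⁻¹ *
              ((n + 2) * ((2 : ℝ) ^ k / (2 : ℝ) ^ l) ^ α))) *
              ((2 * (n + 2) * (2 : ℝ) ^ l) ^ n) := by
            rw [mul_pow (2 * (n + 2) : ℝ)]
            generalize ((2 : ℝ) ^ k / (2 : ℝ) ^ l) ^ α = X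
            field_simp
          have e2 := ofReal_mul_eq (by positivity) (by positivity) (by positivity) e
          unfold orthC
          generalize (((2 * (2 * (n + 2)) + 1 : ℕ) ^ n : ℕ) : ENNReal) = N
          generalize volume (ball (0 : Rn n) 1) = V
          rw [mul_assoc N, mul_right_comm _ V, e2]
          ring
      _ ≤ _ := by
          gcongr
          exact ratio_le_dec hα4 hkl
  · calc _ ≤ ENNReal.ofReal (((2 : ℝ) ^ k) ^ n) * (((2 * (2 * (n + 2)) + 1 : ℕ) ^ n : ℕ) *
          (ENNReal.ofReal ((((2 : ℝ) ^ k) ^ n)⁻¹ * ((n + 2) * ((2 : ℝ) ^ l / (2 : ℝ) ^ k) ^ α)) *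
          (ENNReal.ofReal (3 * (n + 2) * (2 * (n + 2)) ^ n) * volume (ball (0 : Rn n) 1)))) := by
          have hTT : (2 : ℝ) ^ l ≤ (2 : ℝ) ^ k := zpow_le_zpow_right₀ one_le_two hkl
          refine mul_le_mul_right ((tsum_pair_cancel hn hα hα1 hψ (hu.integrable hα) hu.mean
            (ρ := (n + 2) * (2 : ℝ) ^ l) (by gcongr) hu.supp).trans ?_) _
          gcongr
          · exact scaled_ratio_le hα1 l k
          · refine (hu.lintegral_le hn hα hα1).trans ?_
            gcongr
            have : (0 : ℝ) ≤ n := by positivity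
            linarith
      _ = orthC n * ENNReal.ofReal (((2 : ℝ) ^ l / (2 : ℝ) ^ k) ^ α) := by
          have e : (3 * (n + 2) * (n + 2) * (2 * (n + 2)) ^ n : ℝ) *
              ((2 : ℝ) ^ l / (2 : ℝ) ^ k) ^ α = ((2 : ℝ) ^ k) ^ n *
              ((((2 : ℝ) ^ k) ^ n)⁻¹ * ((n + 2) * ((2 : ℝ) ^ l / (2 : ℝ) ^ k) ^ α)) *
              (3 * (n + 2) * (2 * (n + 2)) ^ n) := by
            generalize ((2 : ℝ) ^ l / (2 : ℝ) ^ k) ^ α = X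
            field_simp
          have e2 := ofReal_mul_eq (by positivity) (by positivity) (by positivity) e
          unfold orthC
          generalize (((2 * (2 * (n + 2)) + 1 : ℕ) ^ n : ℕ) : ENNReal) = N
          generalize volume (ball (0 : Rn n) 1) = V
          rw [mul_assoc N, mul_right_comm _ V, e2]
          ring
      _ ≤ _ := by
          gcongr
          rw [dec_sub_comm]
          exact ratio_le_dec hα4 hkl

theorem tsum_gram {n : ℕ} (hn : 0 < n) {α : ℝ} (hα : 0 < α) (hα1 : α ≤ 1)
    {ψ : ℤ × (Fin n → ℤ) → Rn n → ℝ} (hψ : ∀ q, IsBump α q.1 (pt q.1 q.2) (ψ q))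
    (q : ℤ × (Fin n → ℤ)) :
    ∑' q', ENNReal.ofReal (((2 : ℝ) ^ q'.1) ^ n) * ‖∫ z, ψ q' z * ψ q z‖ₑ ≤
      orthC n * ∑' k, dec α k := by
  rw [ENNReal.tsum_prod' (f := fun q' : ℤ × (Fin n → ℤ) =>
    ENNReal.ofReal (((2 : ℝ) ^ q'.1) ^ n) * ‖∫ z, ψ q' z * ψ q z‖ₑ),
    ← tsum_dec_sub α q.1, ← ENNReal.tsum_mul_left]
  apply ENNReal.tsum_le_tsum
  intro k
  dsimp only
  rw [ENNReal.tsum_mul_left]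
  exact tsum_gram_row hn hα hα1 (fun m => hψ (k, m)) (hψ q)

/-- Bessel inequality for an almost orthogonal finite family, by Schur's test on the Gram
matrix. -/
theorem bessel_of_schur {n : ℕ} {ι : Type*} (F : Finset ι) (w : ι → ℝ) (hw : ∀ i, 0 ≤ w i)
    (ψ : ι → Rn n → ℝ) {K : ℝ} (hK : 0 < K)
    (hψψ : ∀ i j, Integrable fun z => ψ i z * ψ j z)
    (hSchur : ∀ i ∈ F, ∑ j ∈ F, w j * |∫ z, ψ j z * ψ i z| ≤ K)
    {g : Rn n → ℝ} (hg2 : Integrable fun z => g z * g z)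
    (hψg : ∀ i, Integrable fun z => ψ i z * g z) :
    ∑ i ∈ F, w i * (∫ z, ψ i z * g z) ^ 2 ≤ K * ∫ z, g z * g z := by
  set c : ι → ℝ := fun i => ∫ z, ψ i z * g z with hc
  set S : ℝ := ∑ i ∈ F, w i * c i ^ 2 with hS
  set a : ι → ℝ := fun i => K⁻¹ * (w i * c i) with ha
  have hexp : ∀ z, (g z - ∑ i ∈ F, a i * ψ i z) ^ 2 = g z * g z
      - 2 * ∑ i ∈ F, a i * (ψ i z * g z) + ∑ i ∈ F, ∑ j ∈ F, a i * a j * (ψ j z * ψ i z) := by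
    intro z
    have e1 : (∑ i ∈ F, a i * ψ i z) * (∑ i ∈ F, a i * ψ i z)
        = ∑ i ∈ F, ∑ j ∈ F, a i * a j * (ψ j z * ψ i z) := by
      rw [Finset.sum_mul_sum]
      refine Finset.sum_congr rfl fun i _ => Finset.sum_congr rfl fun j _ => by ring
    have e2 : g z * (∑ i ∈ F, a i * ψ i z) = ∑ i ∈ F, a i * (ψ i z * g z) := by
      rw [Finset.mul_sum]
      exact Finset.sum_congr rfl fun i _ => by ring
    rw [← e1, ← e2]
    ring
  have hint1 : Integrable fun z => ∑ i ∈ F, a i * (ψ i z * g z) :=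
    integrable_finsetSum _ fun i _ => (hψg i).const_mul _
  have hint2 : Integrable fun z => ∑ i ∈ F, ∑ j ∈ F, a i * a j * (ψ j z * ψ i z) :=
    integrable_finsetSum _ fun i _ => integrable_finsetSum _ fun j _ => (hψψ j i).const_mul _
  have h0 : 0 ≤ ∫ z, (g z - ∑ i ∈ F, a i * ψ i z) ^ 2 := integral_nonneg fun z => sq_nonneg _
  simp_rw [hexp] at h0
  rw [integral_add (by exact hg2.sub (hint1.const_mul 2)) hint2, integral_sub hg2 (hint1.const_mul 2),
    integral_const_mul, integral_finsetSum _ (fun i _ => (hψg i).const_mul _),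
    integral_finsetSum _ (fun i _ => integrable_finsetSum _ fun j _ => (hψψ j i).const_mul _)]
    at h0
  have e1 : ∑ i ∈ F, ∫ z, a i * (ψ i z * g z) = K⁻¹ * S := by
    rw [hS, Finset.mul_sum]
    refine Finset.sum_congr rfl fun i _ => ?_
    rw [integral_const_mul]
    simp only [ha, hc]
    ring
  have e2 : ∑ i ∈ F, ∫ z, ∑ j ∈ F, a i * a j * (ψ j z * ψ i z) ≤ K⁻¹ * S := by
    have hterm : ∀ i ∈ F, ∫ z, ∑ j ∈ F, a i * a j * (ψ j z * ψ i z) ≤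
        ∑ j ∈ F, K⁻¹ ^ 2 * (w i * (w j * |∫ z, ψ j z * ψ i z|) * ((c i ^ 2 + c j ^ 2) / 2)) := by
      intro i _
      rw [integral_finsetSum _ fun j _ => (hψψ j i).const_mul _]
      refine Finset.sum_le_sum fun j _ => ?_
      rw [integral_const_mul]
      set G := ∫ z, ψ j z * ψ i z
      have hcc : c i * c j * G ≤ |G| * ((c i ^ 2 + c j ^ 2) / 2) := by
        have h1 : c i * c j * G ≤ |c i * c j| * |G| := by
          rw [← abs_mul]; exact le_abs_self _
        have h2 : |c i * c j| ≤ (c i ^ 2 + c j ^ 2) / 2 := by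
          rw [abs_le]
          constructor <;> nlinarith [sq_nonneg (c i - c j), sq_nonneg (c i + c j)]
        nlinarith [abs_nonneg G]
      have hnn : 0 ≤ K⁻¹ ^ 2 * (w i * w j) := by
        have := hw i; have := hw j; positivity
      have := mul_le_mul_of_nonneg_left hcc hnn
      simp only [ha]
      nlinarith
    refine (Finset.sum_le_sum hterm).trans ?_
    have hA : ∑ i ∈ F, ∑ j ∈ F, w i * (w j * |∫ z, ψ j z * ψ i z|) * c i ^ 2 ≤ K * S := by
      rw [hS, Finset.mul_sum]
      refine Finset.sum_le_sum fun i hi => ?_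
      have h1 : ∑ j ∈ F, w i * (w j * |∫ z, ψ j z * ψ i z|) * c i ^ 2
          = (w i * c i ^ 2) * ∑ j ∈ F, w j * |∫ z, ψ j z * ψ i z| := by
        rw [Finset.mul_sum]
        exact Finset.sum_congr rfl fun j _ => by ring
      rw [h1, mul_comm K]
      exact mul_le_mul_of_nonneg_left (hSchur i hi) (mul_nonneg (hw i) (sq_nonneg _))
    have hB : ∑ i ∈ F, ∑ j ∈ F, w i * (w j * |∫ z, ψ j z * ψ i z|) * c j ^ 2 ≤ K * S := by
      refine le_trans (le_of_eq ?_) hA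
      rw [Finset.sum_comm]
      refine Finset.sum_congr rfl fun i _ => Finset.sum_congr rfl fun j _ => ?_
      simp_rw [mul_comm (ψ i _)]
      ring
    have hsplit : ∑ i ∈ F, ∑ j ∈ F,
        K⁻¹ ^ 2 * (w i * (w j * |∫ z, ψ j z * ψ i z|) * ((c i ^ 2 + c j ^ 2) / 2)) =
        K⁻¹ ^ 2 / 2 * (∑ i ∈ F, ∑ j ∈ F, w i * (w j * |∫ z, ψ j z * ψ i z|) * c i ^ 2
          + ∑ i ∈ F, ∑ j ∈ F, w i * (w j * |∫ z, ψ j z * ψ i z|) * c j ^ 2) := by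
      rw [← Finset.sum_add_distrib, Finset.mul_sum]
      refine Finset.sum_congr rfl fun i _ => ?_
      rw [← Finset.sum_add_distrib, Finset.mul_sum]
      exact Finset.sum_congr rfl fun j _ => by ring
    rw [hsplit]
    calc _ ≤ K⁻¹ ^ 2 / 2 * (K * S + K * S) := by gcongr
      _ = K⁻¹ * S := by field_simp; ring
  rw [e1] at h0
  have h3 : K⁻¹ * S ≤ ∫ z, g z * g z := by linarith
  rwa [inv_mul_le_iff₀ hK] at h3

/-- The discrete `L²` estimate for the intrinsic square function. -/
theorem tsum_bessel {n : ℕ} (hn : 0 < n) {α : ℝ} (hα : 0 < α) (hα1 : α ≤ 1)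
    {ψ : ℤ × (Fin n → ℤ) → Rn n → ℝ} (hψ : ∀ q, IsBump α q.1 (pt q.1 q.2) (ψ q))
    {g : Rn n → ℝ} (hg : Integrable g) (hg2 : Integrable fun z => g z * g z) :
    ∑' q, ENNReal.ofReal (((2 : ℝ) ^ q.1) ^ n) * ‖∫ z, ψ q z * g z‖ₑ ^ 2 ≤
      (orthC n * ∑' k, dec α k + 1) * ENNReal.ofReal (∫ z, g z * g z) := by
  set Λ := orthC n * ∑' k, dec α k + 1 with hΛ
  have hΛtop : Λ ≠ ⊤ := by
    have := ENNReal.mul_ne_top (orthC_ne_top n) (tsum_dec_ne_top hα)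
    simp [hΛ, this]
  rw [ENNReal.tsum_eq_iSup_sum]
  refine iSup_le fun F => ?_
  have hψψ : ∀ i j, Integrable fun z => ψ i z * ψ j z := fun i j =>
    (hψ i).integrable_mul hn hα hα1 ((hψ j).integrable hα)
  have hψg : ∀ i, Integrable fun z => ψ i z * g z := fun i =>
    (hψ i).integrable_mul hn hα hα1 hg
  have hK : 0 < Λ.toReal := by
    apply ENNReal.toReal_pos _ hΛtop
    simp [hΛ]
  have key := bessel_of_schur F (fun q => ((2 : ℝ) ^ q.1) ^ n)
    (fun q => by have := two_zpow_pos q.1; positivity) ψ hK hψψ ?_ hg2 hψg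
  · calc _ = ENNReal.ofReal (∑ q ∈ F, ((2 : ℝ) ^ q.1) ^ n * (∫ z, ψ q z * g z) ^ 2) := by
          rw [ENNReal.ofReal_sum_of_nonneg
            (fun q _ => by have := two_zpow_pos q.1; positivity)]
          refine Finset.sum_congr rfl fun q _ => ?_
          have := two_zpow_pos q.1
          rw [ENNReal.ofReal_mul (by positivity), ← ofReal_abs_eq,
            ← ENNReal.ofReal_pow (abs_nonneg _), sq_abs]
      _ ≤ ENNReal.ofReal (Λ.toReal * ∫ z, g z * g z) := ENNReal.ofReal_le_ofReal key
      _ = _ := by rw [ENNReal.ofReal_mul hK.le, ENNReal.ofReal_toReal hΛtop]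
  · intro i _
    rw [← ENNReal.ofReal_le_iff_le_toReal hΛtop, ENNReal.ofReal_sum_of_nonneg
      (fun q _ => by have := two_zpow_pos q.1; positivity)]
    calc _ = ∑ q ∈ F, ENNReal.ofReal (((2 : ℝ) ^ q.1) ^ n) * ‖∫ z, ψ q z * ψ i z‖ₑ := by
          refine Finset.sum_congr rfl fun q _ => ?_
          have := two_zpow_pos q.1
          rw [ENNReal.ofReal_mul (by positivity), ofReal_abs_eq]
      _ ≤ ∑' q, ENNReal.ofReal (((2 : ℝ) ^ q.1) ^ n) * ‖∫ z, ψ q z * ψ i z‖ₑ :=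
          ENNReal.sum_le_tsum F
      _ ≤ _ := (tsum_gram hn hα hα1 hψ i).trans le_self_add

/-! ### Polynomial weights and the estimate away from a cube -/

/-- The total mass of the unit-scale weight `(1 + |x|)^(-5n/4)`. -/
def wC (n : ℕ) : ENNReal := ∫⁻ x : Rn n, ENNReal.ofReal ((1 + ‖x‖) ^ (-(5 * n / 4 : ℝ)))

theorem wC_ne_top {n : ℕ} (hn : 0 < n) : wC n ≠ ⊤ := by
  apply (finite_integral_one_add_norm (E := Rn n) _).ne
  have : (0 : ℝ) < n := by exact_mod_cast hn
  simp only [finrank_euclideanSpace, Fintype.card_fin]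
  linarith

/-- The quantity `2ᵏ / (2ᵏ + |x - y|)`, whose powers are the weights of `g*`. -/
def wbase {n : ℕ} (k : ℤ) (y x : Rn n) : ℝ := (2 : ℝ) ^ k / ((2 : ℝ) ^ k + dist x y)

theorem wbase_pos {n : ℕ} (k : ℤ) (y x : Rn n) : 0 < wbase k y x := by
  have := two_zpow_pos k
  unfold wbase
  positivity

theorem wbase_le_one {n : ℕ} (k : ℤ) (y x : Rn n) : wbase k y x ≤ 1 := by
  have := two_zpow_pos k
  unfold wbase
  rw [div_le_one (by positivity)]
  linarith [dist_nonneg (x := x) (y := y)]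

theorem measurable_wbase {n : ℕ} (k : ℤ) (y : Rn n) : Measurable (wbase k y) := by
  unfold wbase
  fun_prop

theorem lintegral_wbase {n : ℕ} (k : ℤ) (y : Rn n) :
    ∫⁻ x, ENNReal.ofReal (wbase k y x ^ (5 * n / 4 : ℝ)) =
      ENNReal.ofReal (((2 : ℝ) ^ k) ^ n) * wC n := by
  have hT := two_zpow_pos k
  have h1 : ∀ x, wbase k y x ^ (5 * n / 4 : ℝ) =
      (1 + ‖((2 : ℝ) ^ k)⁻¹ • (x - y)‖) ^ (-(5 * n / 4 : ℝ)) := by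
    intro x
    rw [Real.rpow_neg (by positivity), ← Real.inv_rpow (by positivity)]
    congr 1
    rw [norm_smul, ← dist_eq_norm, norm_inv, Real.norm_of_nonneg hT.le, wbase]
    have := dist_nonneg (x := x) (y := y)
    field_simp
  simp_rw [h1]
  rw [lintegral_sub_right_eq_self
    (fun x : Rn n => ENNReal.ofReal ((1 + ‖((2 : ℝ) ^ k)⁻¹ • x‖) ^ (-(5 * n / 4 : ℝ)))) y]
  have hF : Measurable fun x : Rn n => ENNReal.ofReal ((1 + ‖x‖) ^ (-(5 * n / 4 : ℝ))) := by
    fun_prop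
  have hs : Measurable fun x : Rn n => ((2 : ℝ) ^ k)⁻¹ • x := by fun_prop
  rw [← lintegral_map hF hs, Measure.map_addHaar_smul _ (inv_ne_zero hT.ne'),
    lintegral_smul_measure, wC]
  simp [abs_of_pos hT]

/-- The square root `(2ᵏ / (2ᵏ + |x - y|))^(3n/2)` of the discretised `g*` weight. -/
def wt {n : ℕ} (k : ℤ) (y x : Rn n) : ENNReal := ENNReal.ofReal (wbase k y x ^ (3 * n / 2 : ℝ))

theorem measurable_wt {n : ℕ} (k : ℤ) (y : Rn n) : Measurable (wt k y) := by
  unfold wt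
  have := measurable_wbase k y
  fun_prop

theorem wt_le_one {n : ℕ} (k : ℤ) (y x : Rn n) : wt k y x ≤ 1 := by
  unfold wt
  rw [← ENNReal.ofReal_one]
  apply ENNReal.ofReal_le_ofReal
  exact Real.rpow_le_one (wbase_pos k y x).le (wbase_le_one k y x) (by positivity)

theorem lintegral_wt_le {n : ℕ} (k : ℤ) (y : Rn n) :
    ∫⁻ x, wt k y x ≤ ENNReal.ofReal (((2 : ℝ) ^ k) ^ n) * wC n := by
  rw [← lintegral_wbase k y]
  apply lintegral_mono
  intro x
  apply ENNReal.ofReal_le_ofReal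
  apply Real.rpow_le_rpow_of_exponent_ge (wbase_pos k y x) (wbase_le_one k y x)
  have : (0 : ℝ) ≤ n := by positivity
  linarith

/-- Away from the centre the mass of the weight is exponentially small in the scale gap. -/
theorem setLIntegral_wt_le {n : ℕ} (hn : 0 < n) {α : ℝ} (hα : 0 < α) (hα1 : α ≤ 1) {k j : ℤ}
    (hkj : k ≤ j) (y : Rn n) {E : Set (Rn n)} (hEm : MeasurableSet E)
    (hE : ∀ x ∈ E, (2 : ℝ) ^ j ≤ dist x y) :
    ∫⁻ x in E, wt k y x ≤ dec α (k - j) * (ENNReal.ofReal (((2 : ℝ) ^ k) ^ n) * wC n) := by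
  have hT := two_zpow_pos k
  have hTj := two_zpow_pos j
  rw [← lintegral_wbase k y]
  have hd : dec α (k - j) ≠ ⊤ := ENNReal.ofReal_ne_top
  rw [← lintegral_const_mul' _ _ hd]
  refine le_trans (setLIntegral_mono' hEm fun x hx => ?_) (setLIntegral_le_lintegral E _)
  refine le_trans ?_ (mul_le_mul_left (ratio_le_dec (le_refl (α / 4)) hkj) _)
  rw [← ENNReal.ofReal_mul (by positivity)]
  apply ENNReal.ofReal_le_ofReal
  have hb := wbase_pos k y x
  have hn1 : (1 : ℝ) ≤ n := by exact_mod_cast hn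
  calc wbase k y x ^ (3 * n / 2 : ℝ) ≤ wbase k y x ^ (α / 4 + 5 * n / 4 : ℝ) := by
        apply Real.rpow_le_rpow_of_exponent_ge hb (wbase_le_one k y x)
        linarith
    _ = wbase k y x ^ (α / 4) * wbase k y x ^ (5 * n / 4 : ℝ) := by
        rw [Real.rpow_add hb]
    _ ≤ _ := by
        gcongr
        unfold wbase
        gcongr
        linarith [hE x hx]

/-- The constant of the estimate away from a cube. -/
def badC (n : ℕ) (α : ℝ) : ENNReal := ((2 * (2 * (n + 2)) + 1 : ℕ) ^ n : ℕ) *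
  (ENNReal.ofReal (3 * (n + 2)) * wC n) * ∑' k, dec α k

theorem badC_ne_top {n : ℕ} (hn : 0 < n) {α : ℝ} (hα : 0 < α) : badC n α ≠ ⊤ :=
  ENNReal.mul_ne_top (ENNReal.mul_ne_top (ENNReal.natCast_ne_top _)
    (ENNReal.mul_ne_top ENNReal.ofReal_ne_top (wC_ne_top hn))) (tsum_dec_ne_top hα)

/-- A mean-zero function supported in a dyadic cube contributes to the discretised `g*` at most
a constant times its `L¹` norm, integrated over a set `E` kept away from the cube; scales above the side of the
cube need no separation, owing to the cancellation of `b`. -/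
theorem tsum_bad_le {n : ℕ} (hn : 0 < n) {α : ℝ} (hα : 0 < α) (hα1 : α ≤ 1)
    {ψ : ℤ × (Fin n → ℤ) → Rn n → ℝ} (hψ : ∀ q, IsBump α q.1 (pt q.1 q.2) (ψ q))
    (Q : ℤ × (Fin n → ℤ)) {b : Rn n → ℝ} (hb : Integrable b) (hb0 : ∫ z, b z = 0)
    (hbs : ∀ z ∉ cell Q, b z = 0) {E : Set (Rn n)} (hEm : MeasurableSet E) {L : Set ℤ}
    (hE : ∀ k ∈ L, k < Q.1 → ∀ x ∈ E, (2 * n + 3) * (2 : ℝ) ^ Q.1 ≤ dist x (pt Q.1 Q.2)) :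
    ∑' q, L.indicator (fun _ => (1 : ENNReal)) q.1 *
      (‖∫ z, ψ q z * b z‖ₑ * ∫⁻ x in E, wt q.1 (pt q.1 q.2) x) ≤
      badC n α * ∫⁻ z, ‖b z‖ₑ := by
  rw [ENNReal.tsum_prod' (f := fun q : ℤ × (Fin n → ℤ) =>
    L.indicator (fun _ => (1 : ENNReal)) q.1 *
      (‖∫ z, ψ q z * b z‖ₑ * ∫⁻ x in E, wt q.1 (pt q.1 q.2) x))]
  unfold badC
  rw [← tsum_dec_sub α Q.1, mul_right_comm, ← ENNReal.tsum_mul_left]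
  apply ENNReal.tsum_le_tsum
  intro k
  dsimp only
  rw [ENNReal.tsum_mul_left]
  by_cases hkL : k ∈ L
  swap
  · rw [indicator_of_notMem hkL, zero_mul]
    exact zero_le
  rw [indicator_of_mem hkL, one_mul]
  have hT := two_zpow_pos k
  have hTj := two_zpow_pos Q.1
  rcases le_or_gt Q.1 k with hjk | hkj
  · have hTT : (2 : ℝ) ^ Q.1 ≤ (2 : ℝ) ^ k := zpow_le_zpow_right₀ one_le_two hjk
    have hn0 : (0 : ℝ) ≤ n := by positivity
    have hsupp : ∀ z, n * (2 : ℝ) ^ Q.1 < dist z (pt Q.1 Q.2) → b z = 0 := by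
      intro z hz
      apply hbs
      intro hz'
      exact absurd (dist_pt_le hz') (not_le.2 hz)
    calc _ ≤ ∑' m, ‖∫ z, ψ (k, m) z * b z‖ₑ * (ENNReal.ofReal (((2 : ℝ) ^ k) ^ n) * wC n) := by
          gcongr with m
          exact (setLIntegral_le_lintegral _ _).trans (lintegral_wt_le _ _)
      _ ≤ (((2 * (2 * (n + 2)) + 1 : ℕ) ^ n : ℕ) *
          (ENNReal.ofReal ((((2 : ℝ) ^ k) ^ n)⁻¹ *
            (3 * (n + 2) * ((2 : ℝ) ^ Q.1 / (2 : ℝ) ^ k) ^ α)) * ∫⁻ z, ‖b z‖ₑ)) *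
          (ENNReal.ofReal (((2 : ℝ) ^ k) ^ n) * wC n) := by
          rw [ENNReal.tsum_mul_right]
          refine mul_le_mul_left ((tsum_pair_cancel hn hα hα1 (fun m => hψ (k, m)) hb hb0
            (by gcongr; linarith) hsupp).trans ?_) _
          gcongr
          calc (n * (2 : ℝ) ^ Q.1 / (2 : ℝ) ^ k) ^ α ≤
                ((n + 2) * (2 : ℝ) ^ Q.1 / (2 : ℝ) ^ k) ^ α := by
                gcongr; linarith
            _ ≤ (n + 2) * ((2 : ℝ) ^ Q.1 / (2 : ℝ) ^ k) ^ α := scaled_ratio_le hα1 _ _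
            _ ≤ _ := by gcongr; linarith
      _ = (((2 * (2 * (n + 2)) + 1 : ℕ) ^ n : ℕ) *
          (ENNReal.ofReal (3 * (n + 2)) * wC n)) * (∫⁻ z, ‖b z‖ₑ) *
          ENNReal.ofReal (((2 : ℝ) ^ Q.1 / (2 : ℝ) ^ k) ^ α) := by
          have e : (3 * (n + 2) : ℝ) * ((2 : ℝ) ^ Q.1 / (2 : ℝ) ^ k) ^ α =
              ((2 : ℝ) ^ k) ^ n * ((((2 : ℝ) ^ k) ^ n)⁻¹ *
              (3 * (n + 2) * ((2 : ℝ) ^ Q.1 / (2 : ℝ) ^ k) ^ α)) * 1 := by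
            generalize ((2 : ℝ) ^ Q.1 / (2 : ℝ) ^ k) ^ α = X
            field_simp
          have e2 := ofReal_mul_eq (by positivity) (by positivity) (by positivity) e
          rw [ENNReal.ofReal_one, mul_one] at e2
          generalize (((2 * (2 * (n + 2)) + 1 : ℕ) ^ n : ℕ) : ENNReal) = N
          calc _ = N * wC n * (∫⁻ z, ‖b z‖ₑ) * (ENNReal.ofReal (((2 : ℝ) ^ k) ^ n) *
                ENNReal.ofReal ((((2 : ℝ) ^ k) ^ n)⁻¹ *
                (3 * (n + 2) * ((2 : ℝ) ^ Q.1 / (2 : ℝ) ^ k) ^ α))) := by ring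
            _ = _ := by rw [← e2]; ring
      _ ≤ _ := by
          gcongr
          rw [dec_sub_comm]
          exact ratio_le_dec (by linarith) hjk
  · have hTT : (2 : ℝ) ^ k ≤ (2 : ℝ) ^ Q.1 := zpow_le_zpow_right₀ one_le_two hkj.le
    calc _ ≤ ∑' m, ‖∫ z, ψ (k, m) z * b z‖ₑ *
          (dec α (k - Q.1) * (ENNReal.ofReal (((2 : ℝ) ^ k) ^ n) * wC n)) := by
          apply ENNReal.tsum_le_tsum
          intro m
          by_cases h0 : ∀ z ∈ cell Q, ψ (k, m) z = 0
          · have : ∫ z, ψ (k, m) z * b z = 0 := by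
              rw [← integral_zero (Rn n) ℝ]
              congr 1
              funext z
              by_cases hz : z ∈ cell Q
              · rw [h0 z hz, zero_mul]
              · rw [hbs z hz, mul_zero]
            rw [this]
            simp
          · push Not at h0
            obtain ⟨z, hz, hz0⟩ := h0
            gcongr
            apply setLIntegral_wt_le hn hα hα1 hkj.le _ hEm
            intro x hx
            have h1 := hE k hkL hkj x hx
            have h2 := dist_pt_le hz
            have h3 : dist z (pt k m) ≤ (n + 2) * (2 : ℝ) ^ Q.1 := by
              have : dist z (pt k m) ≤ (n + 2) * (2 : ℝ) ^ k := by
                by_contra hcon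
                exact hz0 ((hψ (k, m)).supp z (not_le.1 hcon))
              exact this.trans (by gcongr)
            have h4 := dist_triangle x (pt k m) (pt Q.1 Q.2)
            have h5 := dist_triangle_left (pt k m) (pt Q.1 Q.2) z
            linarith
      _ ≤ (((2 * (2 * (n + 2)) + 1 : ℕ) ^ n : ℕ) *
          (ENNReal.ofReal (3 * (n + 2) * (((2 : ℝ) ^ k) ^ n)⁻¹) * ∫⁻ z, ‖b z‖ₑ)) *
          (dec α (k - Q.1) * (ENNReal.ofReal (((2 : ℝ) ^ k) ^ n) * wC n)) := by
          rw [ENNReal.tsum_mul_right]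
          exact mul_le_mul_left (tsum_pair_small hn hα hα1 (fun m => hψ (k, m)) hb) _
      _ = _ := by
          have e : (3 * (n + 2) : ℝ) * 1 =
              ((2 : ℝ) ^ k) ^ n * (3 * (n + 2) * (((2 : ℝ) ^ k) ^ n)⁻¹) * 1 := by
            field_simp
          have e2 := ofReal_mul_eq (by positivity) (by positivity) (by positivity) e
          rw [ENNReal.ofReal_one, mul_one, mul_one] at e2
          generalize (((2 * (2 * (n + 2)) + 1 : ℕ) ^ n : ℕ) : ENNReal) = N
          rw [e2]
          ring

/-! ### A Calderón–Zygmund decomposition with a smallest scale -/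

/-- Stopping-time selection of dyadic cubes for `f` at height `s`, where scales below `2ᵐ` are not
inspected: `π x` is the largest cube around `x` on which the mean of `|f|` exceeds `s`, or the cube
of side `2ᵐ` if there is none. -/
theorem exists_stopping {n : ℕ} (hn : 0 < n) {f : Rn n → ℝ} (hf : Integrable f) {s : ℝ}
    (hs : 0 < s) (m : ℤ) :
    ∃ π : Rn n → ℤ × (Fin n → ℤ), Measurable π ∧ (∀ x, x ∈ cell (π x)) ∧
      (∀ x, ∀ y ∈ cell (π x), π y = π x) ∧ (∀ x, m ≤ (π x).1) ∧
      (∀ x, ∫ z in cell (π x), |f z| ≤ 2 ^ n * s * ((2 : ℝ) ^ (π x).1) ^ n) ∧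
      (∀ x, m < (π x).1 → s * ((2 : ℝ) ^ (π x).1) ^ n < ∫ z in cell (π x), |f z|) := by
  have hP : ∀ x : Rn n, ∃ k : ℤ, (m ≤ k ∧ (k = m ∨
      s * ((2 : ℝ) ^ k) ^ n < ∫ z in cell (k, idx k x), |f z|)) ∧
      ∀ l : ℤ, (m ≤ l ∧ (l = m ∨
      s * ((2 : ℝ) ^ l) ^ n < ∫ z in cell (l, idx l x), |f z|)) → l ≤ k := by
    intro x
    apply Int.exists_greatest_of_bdd
    · obtain ⟨N, hN⟩ := pow_unbounded_of_one_lt ((∫ z, |f z|) / s) (one_lt_two (α := ℝ))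
      refine ⟨max m N, ?_⟩
      rintro l ⟨_, rfl | hl⟩
      · exact le_max_left _ _
      apply le_max_of_le_right
      by_contra! hlN
      have h1 : ∫ z in cell (l, idx l x), |f z| ≤ ∫ z, |f z| :=
        setIntegral_le_integral hf.abs (Filter.Eventually.of_forall fun _ => abs_nonneg _)
      have h2 : (2 : ℝ) ^ N ≤ ((2 : ℝ) ^ l) ^ n := by
        have h3 : (2 : ℝ) ^ (N : ℤ) ≤ (2 : ℝ) ^ l := zpow_le_zpow_right₀ one_le_two hlN.le
        rw [zpow_natCast] at h3
        have h4 : (1 : ℝ) ≤ 2 ^ l := (one_le_pow₀ one_le_two).trans h3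
        exact h3.trans (le_self_pow₀ h4 hn.ne')
      rw [div_lt_iff₀ hs] at hN
      nlinarith
    · exact ⟨m, le_rfl, Or.inl rfl⟩
  choose κ hκ hκ2 using hP
  have hloc : ∀ x y, idx (κ x) y = idx (κ x) x → κ y = κ x := by
    intro x y hxy
    have h1 : κ x ≤ κ y := by
      apply hκ2
      rw [hxy]
      exact hκ x
    apply le_antisymm _ h1
    apply hκ2
    rw [← idx_mono h1 hxy]
    exact hκ y
  have hloc2 : ∀ x, ∀ y ∈ cell (κ x, idx (κ x) x), (κ y, idx (κ y) y) = (κ x, idx (κ x) x) := by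
    intro x y hy
    have hy' : idx (κ x) y = idx (κ x) x := hy
    rw [hloc x y hy', hy']
  refine ⟨fun x => (κ x, idx (κ x) x), ?_, fun x => rfl, hloc2, fun x => (hκ x).1, ?_, ?_⟩
  · apply measurable_to_countable'
    intro Q
    by_cases hQ : ∃ x, (κ x, idx (κ x) x) = Q
    · obtain ⟨x, rfl⟩ := hQ
      convert measurableSet_cell (κ x, idx (κ x) x) using 1
      ext y
      constructor
      · intro hy
        have hy' : (κ y, idx (κ y) y) = (κ x, idx (κ x) x) := hy
        rw [← hy']
        rfl
      · exact hloc2 x y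
    · convert MeasurableSet.empty using 1
      ext y
      simp only [mem_preimage, mem_singleton_iff, mem_empty_iff_false, iff_false]
      exact fun h => hQ ⟨y, h⟩
  · intro x
    dsimp only
    -- the parent cube was rejected
    have h1 : ¬ s * ((2 : ℝ) ^ (κ x + 1)) ^ n < ∫ z in cell (κ x + 1, idx (κ x + 1) x), |f z| := by
      intro h
      have := hκ2 x (κ x + 1) ⟨by linarith [(hκ x).1], Or.inr h⟩
      linarith
    push Not at h1
    have h2 : ∫ z in cell (κ x, idx (κ x) x), |f z| ≤
        ∫ z in cell (κ x + 1, idx (κ x + 1) x), |f z| := by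
      apply setIntegral_mono_set hf.abs.integrableOn
        (Filter.Eventually.of_forall fun _ => abs_nonneg _)
      have hsub : cell (κ x, idx (κ x) x) ⊆ cell (κ x + 1, idx (κ x + 1) x) :=
        fun y hy => idx_succ hy
      exact Filter.Eventually.of_forall hsub
    apply h2.trans (h1.trans (le_of_eq _))
    rw [zpow_add_one₀ two_ne_zero, mul_pow]
    ring
  · intro x hx
    rcases (hκ x).2 with h | h
    · exact absurd h hx.ne'
    · exact h

/-- The Calderón–Zygmund decomposition `f = g + ∑_Q (f - g) 1_{π⁻¹ Q}` attached to the stopping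
cubes, `g` being the mean of `f` on each of them. Cubes of the smallest side `2ᵐ` carry no
lower bound on the mean of `|f|`. -/
theorem exists_cz {n : ℕ} (hn : 0 < n) {f : Rn n → ℝ} (hf : Integrable f) {s : ℝ}
    (hs : 0 < s) (m : ℤ) :
    ∃ (π : Rn n → ℤ × (Fin n → ℤ)) (g : Rn n → ℝ), Measurable π ∧ (∀ x, x ∈ cell (π x)) ∧
      (∀ x, m ≤ (π x).1) ∧
      (∀ x, m < (π x).1 → ENNReal.ofReal (s * ((2 : ℝ) ^ (π x).1) ^ n) ≤
        ∫⁻ z in π ⁻¹' {π x}, ‖f z‖ₑ) ∧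
      Integrable g ∧ Integrable (fun z => g z * g z) ∧
      ∫ z, g z * g z ≤ 2 ^ n * s * ∫ z, |f z| ∧
      (∀ Q, ∫ z in π ⁻¹' {Q}, (f z - g z) = 0) ∧
      (∀ Q, ∫⁻ z in π ⁻¹' {Q}, ‖f z - g z‖ₑ ≤ 2 * ∫⁻ z in π ⁻¹' {Q}, ‖f z‖ₑ) := by
  obtain ⟨π, hπm, hπ1, hπ2, hπ3, hπ4, hπ5⟩ := exists_stopping hn hf hs m
  have hfib : ∀ x, π ⁻¹' {π x} = cell (π x) := by
    intro x
    ext y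
    constructor
    · intro hy
      have hy' : π y = π x := hy
      rw [← hy']
      exact hπ1 y
    · exact hπ2 x y
  have hms : ∀ Q, MeasurableSet (π ⁻¹' {Q}) := fun Q => hπm (measurableSet_singleton Q)
  have hemp : ∀ Q, (∃ x, π x = Q) ∨ π ⁻¹' {Q} = ∅ := by
    intro Q
    by_cases h : ∃ x, π x = Q
    · exact Or.inl h
    · right
      ext y
      simp only [mem_preimage, mem_singleton_iff, mem_empty_iff_false, iff_false]
      exact fun hy => h ⟨y, hy⟩
  set h : ℤ × (Fin n → ℤ) → ℝ := fun Q => (∫ z in π ⁻¹' {Q}, f z) / ((2 : ℝ) ^ Q.1) ^ n with hh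
  have hgm : Measurable fun x => h (π x) := (Measurable.of_discrete (f := h)).comp hπm
  have hsup : ∀ x, |h (π x)| ≤ 2 ^ n * s := by
    intro x
    have hT := two_zpow_pos (π x).1
    rw [hh]
    dsimp only
    rw [abs_div, abs_of_pos (pow_pos hT n), div_le_iff₀ (pow_pos hT n), hfib]
    exact abs_integral_le_integral_abs.trans (hπ4 x)
  have hcong : ∀ Q, ∫⁻ z in π ⁻¹' {Q}, ‖h (π z)‖ₑ = ‖h Q‖ₑ * volume (π ⁻¹' {Q}) := by
    intro Q
    rw [← setLIntegral_const]
    apply setLIntegral_congr_fun (hms Q)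
    intro z hz
    have hz' : π z = Q := hz
    simp only [hz']
  have hQle : ∀ Q, ∫⁻ z in π ⁻¹' {Q}, ‖h (π z)‖ₑ ≤ ∫⁻ z in π ⁻¹' {Q}, ‖f z‖ₑ := by
    intro Q
    rw [hcong]
    rcases hemp Q with ⟨x, rfl⟩ | hQ
    · have hT := pow_pos (two_zpow_pos (π x).1) n
      have hv : volume (π ⁻¹' {π x}) = volume (cell (π x)) := by rw [hfib]
      rw [hv, volume_cell, ← ofReal_abs_eq, ← ENNReal.ofReal_mul (abs_nonneg _), hh]
      dsimp only
      rw [abs_div, abs_of_pos hT, div_mul_cancel₀ _ hT.ne', ofReal_abs_eq]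
      exact enorm_integral_le_lintegral_enorm _
    · rw [hQ]
      simp
  have hun : (⋃ Q, π ⁻¹' {Q}) = univ := by
    ext y
    simp
  have hdisj : Pairwise (Function.onFun Disjoint fun Q => π ⁻¹' {Q}) := by
    intro Q R hQR
    apply Disjoint.preimage
    simpa using hQR
  have hgi : Integrable fun x => h (π x) := by
    refine ⟨hgm.aestronglyMeasurable, ?_⟩
    have h1 : ∫⁻ x, ‖h (π x)‖ₑ ≤ ∫⁻ x, ‖f x‖ₑ := by
      rw [← setLIntegral_univ, ← setLIntegral_univ (fun x => ‖f x‖ₑ), ← hun,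
        lintegral_iUnion hms hdisj, lintegral_iUnion hms hdisj]
      exact ENNReal.tsum_le_tsum hQle
    exact h1.trans_lt hf.2
  have hg1 : ∫ x, |h (π x)| ≤ ∫ x, |f x| := by
    have e1 : ∀ F : Rn n → ℝ, Integrable F →
        ∫ x, |F x| = (∫⁻ x, ‖F x‖ₑ).toReal := by
      intro F hF
      simp_rw [← Real.norm_eq_abs]
      rw [integral_norm_eq_lintegral_enorm hF.1]
    rw [e1 _ hgi, e1 _ hf]
    apply ENNReal.toReal_mono hf.2.ne
    rw [← setLIntegral_univ, ← setLIntegral_univ (fun x => ‖f x‖ₑ), ← hun,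
        lintegral_iUnion hms hdisj, lintegral_iUnion hms hdisj]
    exact ENNReal.tsum_le_tsum hQle
  have hgg : Integrable fun x => h (π x) * h (π x) := by
    apply hgi.bdd_mul (c := 2 ^ n * s) hgm.aestronglyMeasurable
    exact Filter.Eventually.of_forall hsup
  refine ⟨π, fun x => h (π x), hπm, hπ1, hπ3, ?_, hgi, hgg, ?_, ?_, ?_⟩
  · intro x hx
    rw [hfib]
    have := (hπ5 x hx).le
    have e : ∫⁻ z in cell (π x), ‖f z‖ₑ = ENNReal.ofReal (∫ z in cell (π x), |f z|) := by
      simp_rw [← Real.norm_eq_abs]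
      rw [ofReal_integral_norm_eq_lintegral_enorm hf.integrableOn]
    rw [e]
    exact ENNReal.ofReal_le_ofReal this
  · calc ∫ z, h (π z) * h (π z) ≤ ∫ z, 2 ^ n * s * |h (π z)| := by
          apply integral_mono hgg (hgi.abs.const_mul _)
          intro z
          dsimp only
          rw [← abs_mul_abs_self]
          exact mul_le_mul_of_nonneg_right (hsup z) (abs_nonneg _)
      _ = 2 ^ n * s * ∫ z, |h (π z)| := integral_const_mul _ _
      _ ≤ _ := by gcongr
  · intro Q
    rw [integral_sub hf.integrableOn hgi.integrableOn]
    have e : ∫ z in π ⁻¹' {Q}, h (π z) = ∫ z in π ⁻¹' {Q}, h Q := by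
      apply setIntegral_congr_fun (hms Q)
      intro z hz
      have hz' : π z = Q := hz
      simp only [hz']
    rw [e, setIntegral_const]
    rcases hemp Q with ⟨x, rfl⟩ | hQ
    · have hT := pow_pos (two_zpow_pos (π x).1) n
      have hv : volume.real (π ⁻¹' {π x}) = ((2 : ℝ) ^ (π x).1) ^ n := by
        rw [measureReal_def, hfib, volume_cell, ENNReal.toReal_ofReal hT.le]
      rw [hv, hh, smul_eq_mul]
      dsimp only
      field_simp
      ring
    · rw [hQ]
      simp
  · intro Q
    calc _ ≤ ∫⁻ z in π ⁻¹' {Q}, (‖f z‖ₑ + ‖h (π z)‖ₑ) := by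
          apply lintegral_mono
          intro z
          exact enorm_sub_le
      _ = (∫⁻ z in π ⁻¹' {Q}, ‖f z‖ₑ) + ∫⁻ z in π ⁻¹' {Q}, ‖h (π z)‖ₑ :=
          lintegral_add_right _ hgm.enorm
      _ ≤ _ := by
          rw [two_mul]
          exact add_le_add le_rfl (hQle Q)

/-! ### Discretisation of the square function -/

/-- A dilate of a function in `𝒞_α` at a scale and position comparable with those of a dyadic cube
is a bump attached to that cube. -/
theorem isBump_of_mem_Calpha {n : ℕ} {α : ℝ} (hα : 0 < α)
    {φ : Rn n → ℝ} (hφ : φ ∈ Calpha n α) {q : ℤ × (Fin n → ℤ)} {y : Rn n} (hy : y ∈ cell q)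
    {t : ℝ} (h1 : (2 : ℝ) ^ q.1 ≤ t) (h2 : t ≤ 2 * (2 : ℝ) ^ q.1) :
    IsBump α q.1 (pt q.1 q.2) (fun z => (t ^ n)⁻¹ * φ (t⁻¹ • (y - z))) := by
  have hT := two_zpow_pos q.1
  have ht : 0 < t := hT.trans_le h1
  obtain ⟨hs, hm, hh⟩ := hφ
  refine ⟨?_, ?_, ?_⟩
  · intro z hz
    have hd := dist_pt_le hy
    have htri := dist_triangle z y (pt q.1 q.2)
    have : t < dist z y := by nlinarith
    rw [hs, mul_zero]
    rw [norm_smul, norm_inv, Real.norm_of_nonneg ht.le, ← dist_eq_norm, dist_comm,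
      lt_inv_mul_iff₀ ht, mul_one]
    exact this
  · rw [integral_const_mul, integral_sub_left_eq_self (fun w => φ (t⁻¹ • w)) volume y,
      Measure.integral_comp_smul, hm]
    simp
  · intro z z'
    rw [← mul_sub, abs_mul, abs_of_pos (by positivity)]
    have e : ‖t⁻¹ • (y - z) - t⁻¹ • (y - z')‖ ≤ dist z z' / 2 ^ q.1 := by
      rw [← smul_sub, norm_smul, norm_inv, Real.norm_of_nonneg ht.le, sub_sub_sub_cancel_left,
        ← dist_eq_norm, dist_comm, div_eq_inv_mul]
      gcongr
    gcongr
    exact (hh _ _).trans (by gcongr)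

/-- On the Whitney box of a dyadic cube, `A_α f` is controlled by testing against one bump. -/
theorem exists_bump {n : ℕ} (hn : 0 < n) {α : ℝ} (hα : 0 < α) (hα1 : α ≤ 1)
    {f : Rn n → ℝ} (hf : Integrable f) (q : ℤ × (Fin n → ℤ)) :
    ∃ ψ : Rn n → ℝ, IsBump α q.1 (pt q.1 q.2) ψ ∧ ∀ y ∈ cell q, ∀ t : ℝ,
      (2 : ℝ) ^ q.1 ≤ t → t ≤ 2 * (2 : ℝ) ^ q.1 → Aalpha α f y t ≤ 2 * |∫ z, ψ z * f z| := by
  set S : Set ℝ := {r | ∃ ψ, IsBump α q.1 (pt q.1 q.2) ψ ∧ r = |∫ z, ψ z * f z|} with hS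
  have hbdd : BddAbove S := by
    refine ⟨3 * (n + 2) * (((2 : ℝ) ^ q.1) ^ n)⁻¹ * ∫ z, |f z|, ?_⟩
    rintro r ⟨ψ, hψ, rfl⟩
    rw [← integral_const_mul]
    apply abs_integral_le_integral_abs.trans
    apply integral_mono (hψ.integrable_mul hn hα hα1 hf).abs (hf.abs.const_mul _)
    intro z
    dsimp only
    rw [abs_mul]
    exact mul_le_mul_of_nonneg_right (hψ.abs_le hn hα hα1 z) (abs_nonneg _)
  have hle : ∀ y ∈ cell q, ∀ t : ℝ, (2 : ℝ) ^ q.1 ≤ t → t ≤ 2 * (2 : ℝ) ^ q.1 →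
      Aalpha α f y t ≤ max 0 (sSup S) := by
    intro y hy t h1 h2
    apply Real.iSup_le _ (le_max_left _ _)
    intro φ
    apply Real.iSup_le _ (le_max_left _ _)
    intro hφ
    apply le_max_of_le_right
    exact le_csSup hbdd ⟨_, isBump_of_mem_Calpha hα hφ hy h1 h2, rfl⟩
  rcases le_or_gt (sSup S) 0 with h0 | h0
  · refine ⟨_, isBump_zero, ?_⟩
    intro y hy t h1 h2
    apply (hle y hy t h1 h2).trans
    rw [max_eq_left h0]
    positivity
  · have hne : S.Nonempty := by
      by_contra h
      rw [not_nonempty_iff_eq_empty] at h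
      rw [h, Real.sSup_empty] at h0
      exact lt_irrefl _ h0
    obtain ⟨r, ⟨ψ, hψ, rfl⟩, hr⟩ := exists_lt_of_lt_csSup hne (half_lt_self h0)
    refine ⟨ψ, hψ, ?_⟩
    intro y hy t h1 h2
    apply (hle y hy t h1 h2).trans
    rw [max_eq_right h0.le]
    linarith

/-- The region `Q × [ℓ(Q), 2ℓ(Q))` of the upper half-space over a dyadic cube. -/
def box {n : ℕ} (q : ℤ × (Fin n → ℤ)) : Set (Rn n × ℝ) :=
  cell q ×ˢ Ico ((2 : ℝ) ^ q.1) (2 * (2 : ℝ) ^ q.1)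

theorem volume_box {n : ℕ} (q : ℤ × (Fin n → ℤ)) :
    volume (box q) = ENNReal.ofReal (((2 : ℝ) ^ q.1) ^ (n + 1)) := by
  have hT := two_zpow_pos q.1
  rw [box, Measure.volume_eq_prod, Measure.prod_prod, volume_cell, Real.volume_Ico,
    ← ENNReal.ofReal_mul (by positivity)]
  congr 1
  ring

theorem subset_iUnion_box {n : ℕ} : {p : Rn n × ℝ | 0 < p.2} ⊆ ⋃ q, box q := by
  rintro ⟨y, t⟩ ht
  have ht' : 0 < t := ht
  obtain ⟨k, hk1, hk2⟩ := exists_mem_Ico_zpow ht' (one_lt_two (α := ℝ))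
  rw [mem_iUnion]
  refine ⟨(k, idx k y), rfl, hk1, ?_⟩
  rw [zpow_add_one₀ two_ne_zero] at hk2
  dsimp only
  linarith

/-- The weight of `g*` on a Whitney box is controlled by its value at the corner of the cube. -/
theorem weight_le {n : ℕ} (hn : 0 < n) {α lam : ℝ} (hα : 0 < α)
    (hlam : (3 * n + 2 * α) / n < lam) {q : ℤ × (Fin n → ℤ)} {y x : Rn n} (hy : y ∈ cell q)
    {t : ℝ} (h1 : (2 : ℝ) ^ q.1 ≤ t) (h2 : t ≤ 2 * (2 : ℝ) ^ q.1) :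
    (t / (t + dist x y)) ^ (lam * n) ≤
      (2 * (1 + n)) ^ (3 * n) * (wbase q.1 (pt q.1 q.2) x) ^ (3 * n) := by
  have hT := two_zpow_pos q.1
  have ht : 0 < t := hT.trans_le h1
  have hd := dist_nonneg (x := x) (y := y)
  have hd' := dist_nonneg (x := x) (y := pt q.1 q.2)
  have hnr : (0 : ℝ) < n := by exact_mod_cast hn
  have hb : t / (t + dist x y) ≤ 2 * (1 + n) * wbase q.1 (pt q.1 q.2) x := by
    have htri := dist_triangle x y (pt q.1 q.2)
    have hdy := dist_pt_le hy
    rw [wbase, ← mul_div_assoc, div_le_div_iff₀ (by positivity) (by positivity)]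
    have h3 : (2 : ℝ) ^ q.1 + dist x (pt q.1 q.2) ≤ (1 + n) * (t + dist x y) := by nlinarith
    calc _ ≤ (2 * (2 : ℝ) ^ q.1) * ((1 + n) * (t + dist x y)) := by gcongr
      _ = _ := by ring
  calc (t / (t + dist x y)) ^ (lam * n) ≤ (t / (t + dist x y)) ^ ((3 * n : ℕ) : ℝ) := by
        apply Real.rpow_le_rpow_of_exponent_ge (by positivity)
        · rw [div_le_one (by positivity)]
          linarith
        · rw [div_lt_iff₀ hnr] at hlam
          push_cast
          linarith
    _ = (t / (t + dist x y)) ^ (3 * n) := Real.rpow_natCast _ _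
    _ ≤ (2 * (1 + n) * wbase q.1 (pt q.1 q.2) x) ^ (3 * n) := by gcongr
    _ = _ := mul_pow _ _ _

theorem wt_sq {n : ℕ} (k : ℤ) (y x : Rn n) :
    wt k y x ^ 2 = ENNReal.ofReal (wbase k y x ^ (3 * n)) := by
  have := wbase_pos k y x
  rw [wt, ← ENNReal.ofReal_pow (by positivity), ← Real.rpow_natCast, ← Real.rpow_natCast,
    ← Real.rpow_mul this.le]
  congr 2
  push_cast
  ring

/-- The constant lost when discretising `g*`. -/
def discC (n : ℕ) : ℝ := 4 * (2 * (1 + n)) ^ (3 * n)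

theorem discC_pos (n : ℕ) : 0 < discC n := by
  unfold discC
  positivity

theorem setLIntegral_box_le {n : ℕ} (hn : 0 < n) {α lam : ℝ} (hα : 0 < α)
    (hlam : (3 * n + 2 * α) / n < lam) {f : Rn n → ℝ} {q : ℤ × (Fin n → ℤ)} {c : ℝ}
    (hc : ∀ y ∈ cell q, ∀ t : ℝ,
      (2 : ℝ) ^ q.1 ≤ t → t ≤ 2 * (2 : ℝ) ^ q.1 → Aalpha α f y t ≤ 2 * |c|) (x : Rn n) :
    ∫⁻ p in box q, ‖(p.2 / (p.2 + dist x p.1)) ^ (lam * n) * Aalpha α f p.1 p.2 ^ 2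
        / p.2 ^ (n + 1)‖ₑ ≤
      ENNReal.ofReal (discC n) * (wt q.1 (pt q.1 q.2) x ^ 2 * ‖c‖ₑ ^ 2) := by
  have hT := two_zpow_pos q.1
  have hw := wbase_pos q.1 (pt q.1 q.2) x
  set K : ℝ := ((2 * (1 + n)) ^ (3 * n) * (wbase q.1 (pt q.1 q.2) x) ^ (3 * n)) * (2 * |c|) ^ 2
    / ((2 : ℝ) ^ q.1) ^ (n + 1) with hK
  calc _ ≤ ∫⁻ _p in box q, ENNReal.ofReal K := by
        apply setLIntegral_mono measurable_const
        rintro ⟨y, t⟩ ⟨hy, h1, h2⟩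
        dsimp only at hy h1 h2 ⊢
        have ht : 0 < t := hT.trans_le h1
        have hd := dist_nonneg (x := x) (y := y)
        have hA : 0 ≤ Aalpha α f y t :=
          Real.iSup_nonneg fun φ => Real.iSup_nonneg fun _ => abs_nonneg _
        rw [← ofReal_abs_eq, abs_of_nonneg (by positivity)]
        apply ENNReal.ofReal_le_ofReal
        rw [hK]
        gcongr
        · exact weight_le hn hα hlam hy h1 h2.le
        · exact hc y hy t h1 h2.le
    _ = ENNReal.ofReal (discC n * (wbase q.1 (pt q.1 q.2) x ^ (3 * n) * |c| ^ 2)) := by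
        rw [setLIntegral_const, volume_box, ← ENNReal.ofReal_mul (by positivity)]
        congr 1
        rw [hK, discC]
        field_simp
        ring
    _ = _ := by
        rw [wt_sq, ← ofReal_abs_eq c, ← ENNReal.ofReal_pow (abs_nonneg _),
          ← ENNReal.ofReal_mul (by positivity), ← ENNReal.ofReal_mul (discC_pos n).le]

/-- `g*` is dominated by a discrete square function built from bumps. -/
theorem lt_gstar {n : ℕ} (hn : 0 < n) {α lam : ℝ} (hα : 0 < α)
    (hlam : (3 * n + 2 * α) / n < lam) {f : Rn n → ℝ} {c : ℤ × (Fin n → ℤ) → ℝ}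
    (hc : ∀ q, ∀ y ∈ cell q, ∀ t : ℝ,
      (2 : ℝ) ^ q.1 ≤ t → t ≤ 2 * (2 : ℝ) ^ q.1 → Aalpha α f y t ≤ 2 * |c q|) {x : Rn n} {σ : ℝ}
    (hσ : 0 < σ) (hx : σ < gstarAlpha α lam f x) :
    ENNReal.ofReal (σ ^ 2 / discC n) < ∑' q, wt q.1 (pt q.1 q.2) x ^ 2 * ‖c q‖ₑ ^ 2 := by
  have hC := discC_pos n
  rw [gstarAlpha, Real.lt_sqrt hσ.le] at hx
  have h1 : ENNReal.ofReal (σ ^ 2) <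
      ENNReal.ofReal (discC n) * ∑' q, wt q.1 (pt q.1 q.2) x ^ 2 * ‖c q‖ₑ ^ 2 := by
    apply ((ENNReal.ofReal_lt_ofReal_iff ((sq_nonneg σ).trans_lt hx)).2 hx).trans_le
    apply (Real.ofReal_le_enorm _).trans
    apply (enorm_integral_le_lintegral_enorm _).trans
    apply (lintegral_mono_set subset_iUnion_box).trans
    apply (lintegral_iUnion_le _ _).trans
    rw [← ENNReal.tsum_mul_left]
    exact ENNReal.tsum_le_tsum fun q => setLIntegral_box_le hn hα hlam (hc q) x
  rw [ENNReal.ofReal_div_of_pos hC]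
  apply ENNReal.div_lt_of_lt_mul
  rwa [mul_comm]

/-! ### The weak type estimate -/

/-- The good part: Chebyshev in `L²`. -/
theorem meas_good_le {n : ℕ} (hn : 0 < n) {α : ℝ} (hα : 0 < α) (hα1 : α ≤ 1)
    {ψ : ℤ × (Fin n → ℤ) → Rn n → ℝ} (hψ : ∀ q, IsBump α q.1 (pt q.1 q.2) (ψ q))
    {g : Rn n → ℝ} (hg : Integrable g) (hg2 : Integrable fun z => g z * g z) (a : ENNReal) :
    a * volume {x | a ≤ 8 * ∑' q, wt q.1 (pt q.1 q.2) x ^ 2 * ‖∫ z, ψ q z * g z‖ₑ ^ 2} ≤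
      8 * (wC n * ((orthC n * ∑' k, dec α k + 1) * ENNReal.ofReal (∫ z, g z * g z))) := by
  have hm : ∀ q : ℤ × (Fin n → ℤ), Measurable fun x =>
      wt q.1 (pt q.1 q.2) x ^ 2 * ‖∫ z, ψ q z * g z‖ₑ ^ 2 :=
    fun q => ((measurable_wt _ _).pow_const 2).mul_const _
  apply (mul_meas_ge_le_lintegral ((Measurable.tsum hm).const_mul 8) a).trans
  rw [lintegral_const_mul _ (Measurable.tsum hm), lintegral_tsum fun q => (hm q).aemeasurable]
  apply mul_le_mul' le_rfl
  apply le_trans _ (mul_le_mul' le_rfl (tsum_bessel hn hα hα1 hψ hg hg2))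
  rw [← ENNReal.tsum_mul_left]
  apply ENNReal.tsum_le_tsum
  intro q
  rw [lintegral_mul_const _ ((measurable_wt _ _).pow_const 2), ← mul_assoc, mul_comm (wC n)]
  apply mul_le_mul' _ le_rfl
  apply le_trans _ (lintegral_wt_le q.1 (pt q.1 q.2))
  apply lintegral_mono
  intro x
  dsimp only
  rw [pow_two]
  exact mul_le_of_le_one_right' (wt_le_one _ _ _)

/-- The neighbourhood of a stopping cube on which the bad part is not estimated; it is empty for
the cubes of the smallest side and for those which are not stopping cubes. -/
def halo {n : ℕ} (π : Rn n → ℤ × (Fin n → ℤ)) (m : ℤ) (Q : ℤ × (Fin n → ℤ)) : Set (Rn n) :=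
  {x | (m < Q.1 ∧ ∃ y, π y = Q) ∧ x ∈ closedBall (pt Q.1 Q.2) ((2 * n + 3) * (2 : ℝ) ^ Q.1)}

theorem halo_eq {n : ℕ} {π : Rn n → ℤ × (Fin n → ℤ)} {m : ℤ} {Q : ℤ × (Fin n → ℤ)}
    (h : m < Q.1 ∧ ∃ y, π y = Q) :
    halo π m Q = closedBall (pt Q.1 Q.2) ((2 * n + 3) * (2 : ℝ) ^ Q.1) := by
  ext x
  exact and_iff_right h

theorem halo_eq_empty {n : ℕ} {π : Rn n → ℤ × (Fin n → ℤ)} {m : ℤ} {Q : ℤ × (Fin n → ℤ)}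
    (h : ¬ (m < Q.1 ∧ ∃ y, π y = Q)) : halo π m Q = ∅ := by
  ext x
  exact iff_of_false (fun hx => h hx.1) (notMem_empty x)

theorem measurableSet_halo {n : ℕ} (π : Rn n → ℤ × (Fin n → ℤ)) (m : ℤ) (Q : ℤ × (Fin n → ℤ)) :
    MeasurableSet (halo π m Q) := by
  by_cases h : m < Q.1 ∧ ∃ y, π y = Q
  · rw [halo_eq h]
    exact measurableSet_closedBall
  · rw [halo_eq_empty h]
    exact MeasurableSet.empty

/-- The constant in the bound for the measure of the exceptional set. -/
def haloC (n : ℕ) : ENNReal := ENNReal.ofReal ((2 * n + 3) ^ n) * volume (ball (0 : Rn n) 1)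

theorem haloC_ne_top (n : ℕ) : haloC n ≠ ⊤ :=
  ENNReal.mul_ne_top ENNReal.ofReal_ne_top measure_ball_lt_top.ne

theorem tsum_fibre {n : ℕ} {π : Rn n → ℤ × (Fin n → ℤ)} (hπ : Measurable π)
    (F : Rn n → ENNReal) : ∑' Q, ∫⁻ z in π ⁻¹' {Q}, F z = ∫⁻ z, F z := by
  rw [← lintegral_iUnion (fun Q => hπ (measurableSet_singleton Q))]
  · have hun : (⋃ Q, π ⁻¹' {Q}) = univ := by
      ext y
      simp
    rw [hun, setLIntegral_univ]
  · intro Q R hQR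
    apply Disjoint.preimage
    simpa using hQR

theorem meas_halo_le {n : ℕ} {π : Rn n → ℤ × (Fin n → ℤ)} (hπ : Measurable π) {f : Rn n → ℝ}
    {s : ℝ} (hs : 0 < s) {m : ℤ}
    (h : ∀ x, m < (π x).1 → ENNReal.ofReal (s * ((2 : ℝ) ^ (π x).1) ^ n) ≤
        ∫⁻ z in π ⁻¹' {π x}, ‖f z‖ₑ) :
    ENNReal.ofReal s * volume (⋃ Q, halo π m Q) ≤ haloC n * ∫⁻ z, ‖f z‖ₑ := by
  apply (mul_le_mul' le_rfl (measure_iUnion_le _)).trans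
  rw [← tsum_fibre hπ, ← ENNReal.tsum_mul_left, ← ENNReal.tsum_mul_left]
  apply ENNReal.tsum_le_tsum
  intro Q
  by_cases hQ : m < Q.1 ∧ ∃ y, π y = Q
  · rw [halo_eq hQ]
    obtain ⟨hm, x, rfl⟩ := hQ
    have hT := two_zpow_pos (π x).1
    apply le_trans _ (mul_le_mul' le_rfl (h x hm))
    rw [volume_closedBall_le _ (by positivity), haloC, mul_pow, ENNReal.ofReal_mul hs.le,
      ENNReal.ofReal_mul (by positivity)]
    apply le_of_eq
    ring
  · rw [halo_eq_empty hQ]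
    simp

/-- The bad part off the exceptional set: Chebyshev in `L¹`. -/
theorem meas_bad_le {n : ℕ} (hn : 0 < n) {α : ℝ} (hα : 0 < α) (hα1 : α ≤ 1)
    {ψ : ℤ × (Fin n → ℤ) → Rn n → ℝ} (hψ : ∀ q, IsBump α q.1 (pt q.1 q.2) (ψ q))
    {f b : Rn n → ℝ} (hb : Integrable b) {π : Rn n → ℤ × (Fin n → ℤ)} (hπ : Measurable π)
    (hπ1 : ∀ x, x ∈ cell (π x)) {m : ℤ}
    (hb0 : ∀ Q, ∫ z in π ⁻¹' {Q}, b z = 0)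
    (hb1 : ∀ Q, ∫⁻ z in π ⁻¹' {Q}, ‖b z‖ₑ ≤ 2 * ∫⁻ z in π ⁻¹' {Q}, ‖f z‖ₑ) (a : ENNReal) :
    a * volume ({x | a ≤ 3 * ∑' q, (Ici m).indicator (fun _ => 1) q.1 *
        (wt q.1 (pt q.1 q.2) x * ‖∫ z, ψ q z * b z‖ₑ)} ∩ (⋃ Q, halo π m Q)ᶜ) ≤
      6 * badC n α * ∫⁻ z, ‖f z‖ₑ := by
  set E : Set (Rn n) := (⋃ Q, halo π m Q)ᶜ with hE
  have hEm : MeasurableSet E := (MeasurableSet.iUnion fun Q => measurableSet_halo π m Q).compl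
  have hms : ∀ Q, MeasurableSet (π ⁻¹' {Q}) := fun Q => hπ (measurableSet_singleton Q)
  set β : ℤ × (Fin n → ℤ) → Rn n → ℝ := fun Q => (π ⁻¹' {Q}).indicator b with hβ
  have hsplit : ∀ q, ‖∫ z, ψ q z * b z‖ₑ ≤ ∑' Q, ‖∫ z, ψ q z * β Q z‖ₑ := by
    intro q
    have hun : (⋃ Q, π ⁻¹' {Q}) = univ := by
      ext y
      simp
    have hi := (hψ q).integrable_mul hn hα hα1 hb
    have h1 := integral_iUnion (f := fun z => ψ q z * b z) (μ := volume) hms (by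
      intro Q R hQR
      apply Disjoint.preimage
      simpa using hQR) hi.integrableOn
    rw [hun, setIntegral_univ] at h1
    rw [h1]
    apply enorm_tsum_le_tsum_enorm.trans
    apply ENNReal.tsum_le_tsum
    intro Q
    rw [← integral_indicator (hms Q)]
    apply le_of_eq
    congr 2
    ext z
    exact indicator_mul_right (π ⁻¹' {Q}) (ψ q) b
  have hm : ∀ q : ℤ × (Fin n → ℤ), Measurable fun x => (Ici m).indicator (fun _ => 1) q.1 *
        (wt q.1 (pt q.1 q.2) x * ‖∫ z, ψ q z * b z‖ₑ) :=
    fun q => ((measurable_wt _ _).mul_const _).const_mul _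
  have hm' := Measurable.tsum (L := SummationFilter.unconditional _) hm
  have hMk := mul_meas_ge_le_lintegral (μ := (volume : Measure (Rn n)).restrict E)
    (hm'.const_mul 3) a
  rw [Measure.restrict_apply' hEm] at hMk
  apply hMk.trans
  rw [lintegral_const_mul _ hm', lintegral_tsum fun q => (hm q).aemeasurable]
  have hQ : ∀ Q, ∑' q, (Ici m).indicator (fun _ => 1) q.1 *
      (‖∫ z, ψ q z * β Q z‖ₑ * ∫⁻ x in E, wt q.1 (pt q.1 q.2) x) ≤
      badC n α * (2 * ∫⁻ z in π ⁻¹' {Q}, ‖f z‖ₑ) := by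
    intro Q
    have hβi : Integrable (β Q) := hb.indicator (hms Q)
    have hβn : ∫⁻ z, ‖β Q z‖ₑ = ∫⁻ z in π ⁻¹' {Q}, ‖b z‖ₑ := by
      rw [← lintegral_indicator (hms Q)]
      congr 1
      ext z
      exact enorm_indicator_eq_indicator_enorm b z
    by_cases hne : ∃ y, π y = Q
    · apply le_trans _ (mul_le_mul' le_rfl (hb1 Q))
      rw [← hβn]
      apply tsum_bad_le hn hα hα1 hψ Q hβi _ _ hEm
      · intro k hk hkQ x hx
        have hk' : m ≤ k := hk
        by_contra! hlt
        apply hx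
        rw [mem_iUnion]
        refine ⟨Q, ?_⟩
        rw [halo_eq ⟨hk'.trans_lt hkQ, hne⟩]
        exact hlt.le
      · rw [integral_indicator (hms Q), hb0]
      · intro z hz
        apply indicator_of_notMem
        intro hzQ
        have hzQ' : π z = Q := hzQ
        exact hz (hzQ' ▸ hπ1 z)
    · have : β Q = 0 := by
        ext z
        apply indicator_of_notMem
        exact fun hz => hne ⟨z, hz⟩
      simp [this]
  calc _ ≤ 3 * ∑' q : ℤ × (Fin n → ℤ), ∑' Q, (Ici m).indicator (fun _ => 1) q.1 *
          (‖∫ z, ψ q z * β Q z‖ₑ * ∫⁻ x in E, wt q.1 (pt q.1 q.2) x) := by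
        apply mul_le_mul' le_rfl
        apply ENNReal.tsum_le_tsum
        intro q
        rw [lintegral_const_mul _ ((measurable_wt _ _).mul_const _),
          lintegral_mul_const _ (measurable_wt _ _), ENNReal.tsum_mul_left, ENNReal.tsum_mul_right,
          mul_comm (lintegral _ _)]
        exact mul_le_mul' le_rfl (mul_le_mul' (hsplit q) le_rfl)
    _ ≤ 3 * ∑' Q, badC n α * (2 * ∫⁻ z in π ⁻¹' {Q}, ‖f z‖ₑ) := by
        rw [ENNReal.tsum_comm]
        exact mul_le_mul' le_rfl (ENNReal.tsum_le_tsum hQ)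
    _ = _ := by
        rw [ENNReal.tsum_mul_left, ENNReal.tsum_mul_left, tsum_fibre hπ]
        ring

theorem sq_add_le (x y : ENNReal) : (x + y) ^ 2 ≤ 4 * x ^ 2 + 4 * y ^ 2 := by
  calc (x + y) ^ 2 ≤ (2 * max x y) ^ 2 := by
        rw [two_mul]
        gcongr
        · exact le_max_left _ _
        · exact le_max_right _ _
    _ = 4 * (max x y) ^ 2 := by ring
    _ ≤ _ := by
        rcases max_cases x y with ⟨h, _⟩ | ⟨h, _⟩ <;> rw [h]
        · exact le_self_add
        · exact le_add_self

/-- The sum of squares of a family is at most the square of its sum. -/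
theorem tsum_sq_le {ι : Type*} (u : ι → ENNReal) : ∑' i, u i ^ 2 ≤ (∑' i, u i) ^ 2 := by
  rw [pow_two, ← ENNReal.tsum_mul_left]
  apply ENNReal.tsum_le_tsum
  intro i
  rw [pow_two]
  exact mul_le_mul' (ENNReal.le_tsum i) le_rfl

/-- The weak type constant of the discrete square function. -/
def weakC (n : ℕ) (α : ℝ) : ENNReal :=
  8 * (wC n * ((orthC n * ∑' k, dec α k + 1) * 2 ^ n)) + haloC n + 6 * badC n α

theorem weakC_ne_top {n : ℕ} (hn : 0 < n) {α : ℝ} (hα : 0 < α) : weakC n α ≠ ⊤ := by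
  have h1 := wC_ne_top hn
  have h2 := orthC_ne_top n
  have h3 := tsum_dec_ne_top hα
  have h4 := haloC_ne_top n
  have h5 := badC_ne_top hn hα
  unfold weakC
  finiteness

/-- The weak type estimate for the part of the discrete square function carried by scales at
least `2ᵐ`, with a constant independent of `m`. -/
theorem weak_trunc {n : ℕ} (hn : 0 < n) {α : ℝ} (hα : 0 < α) (hα1 : α ≤ 1)
    {ψ : ℤ × (Fin n → ℤ) → Rn n → ℝ} (hψ : ∀ q, IsBump α q.1 (pt q.1 q.2) (ψ q))
    {f : Rn n → ℝ} (hf : Integrable f) {s : ℝ} (hs : 0 < s) (m : ℤ) :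
    ENNReal.ofReal s * volume {x | ENNReal.ofReal s ^ 2 < ∑' q : ℤ × (Fin n → ℤ),
        (Ici m).indicator (fun _ => 1) q.1 *
          (wt q.1 (pt q.1 q.2) x ^ 2 * ‖∫ z, ψ q z * f z‖ₑ ^ 2)} ≤
      weakC n α * ∫⁻ z, ‖f z‖ₑ := by
  obtain ⟨π, g, hπ, hπ1, hπm, hπ3, hg, hg2, hgs, hb0, hb1⟩ := exists_cz hn hf hs m
  set S := ENNReal.ofReal s with hS
  have hS0 : S ≠ 0 := by simpa [hS] using hs
  have hSt : S ≠ ⊤ := ENNReal.ofReal_ne_top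
  set b : Rn n → ℝ := fun z => f z - g z with hbdef
  have hb : Integrable b := hf.sub hg
  set A : Rn n → ENNReal := fun x =>
    ∑' q, wt q.1 (pt q.1 q.2) x ^ 2 * ‖∫ z, ψ q z * g z‖ₑ ^ 2 with hA
  set B : Rn n → ENNReal := fun x => ∑' q, (Ici m).indicator (fun _ => 1) q.1 *
        (wt q.1 (pt q.1 q.2) x * ‖∫ z, ψ q z * b z‖ₑ) with hB
  have hF : ENNReal.ofReal (∫ z, |f z|) = ∫⁻ z, ‖f z‖ₑ := by
    simp_rw [← Real.norm_eq_abs]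
    exact ofReal_integral_norm_eq_lintegral_enorm hf
  have hpt : ∀ x, ∑' q : ℤ × (Fin n → ℤ), (Ici m).indicator (fun _ => 1) q.1 *
      (wt q.1 (pt q.1 q.2) x ^ 2 * ‖∫ z, ψ q z * f z‖ₑ ^ 2) ≤ 4 * A x + 4 * B x ^ 2 := by
    intro x
    calc _ ≤ ∑' q : ℤ × (Fin n → ℤ),
          (4 * (wt q.1 (pt q.1 q.2) x ^ 2 * ‖∫ z, ψ q z * g z‖ₑ ^ 2) +
          4 * ((Ici m).indicator (fun _ => 1) q.1 *
            (wt q.1 (pt q.1 q.2) x * ‖∫ z, ψ q z * b z‖ₑ)) ^ 2) := by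
          apply ENNReal.tsum_le_tsum
          intro q
          by_cases hq : q.1 ∈ Ici m
          · rw [indicator_of_mem hq, one_mul, one_mul]
            have e : ∫ z, ψ q z * f z = (∫ z, ψ q z * g z) + ∫ z, ψ q z * b z := by
              rw [← integral_add ((hψ q).integrable_mul hn hα hα1 hg)
                ((hψ q).integrable_mul hn hα hα1 hb)]
              congr 1
              ext z
              rw [hbdef]
              ring
            rw [e]
            calc _ ≤ wt q.1 (pt q.1 q.2) x ^ 2 *
                  (‖∫ z, ψ q z * g z‖ₑ + ‖∫ z, ψ q z * b z‖ₑ) ^ 2 := by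
                  gcongr
                  exact enorm_add_le _ _
              _ ≤ _ := mul_le_mul' le_rfl (sq_add_le _ _)
              _ = _ := by ring
          · rw [indicator_of_notMem hq, zero_mul]
            exact zero_le
      _ ≤ _ := by
          rw [ENNReal.tsum_add, ENNReal.tsum_mul_left, ENNReal.tsum_mul_left]
          exact add_le_add le_rfl (mul_le_mul' le_rfl (tsum_sq_le _))
  have hsub : {x | S ^ 2 < ∑' q : ℤ × (Fin n → ℤ), (Ici m).indicator (fun _ => 1) q.1 *
      (wt q.1 (pt q.1 q.2) x ^ 2 * ‖∫ z, ψ q z * f z‖ₑ ^ 2)} ⊆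
      {x | S ^ 2 ≤ 8 * A x} ∪ ((⋃ Q, halo π m Q) ∪
        ({x | S ≤ 3 * B x} ∩ (⋃ Q, halo π m Q)ᶜ)) := by
    intro x hx
    have hx' : S ^ 2 < 4 * A x + 4 * B x ^ 2 := lt_of_lt_of_le hx (hpt x)
    by_cases h1 : S ^ 2 ≤ 8 * A x
    · exact Or.inl h1
    by_cases h2 : x ∈ ⋃ Q, halo π m Q
    · exact Or.inr (Or.inl h2)
    refine Or.inr (Or.inr ⟨?_, h2⟩)
    by_contra h3
    have h3' : 3 * B x < S := not_le.1 h3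
    have h1' : 8 * A x < S ^ 2 := not_le.1 h1
    have h4 : 9 * B x ^ 2 ≤ S ^ 2 := by
      calc 9 * B x ^ 2 = (3 * B x) ^ 2 := by ring
        _ ≤ _ := by gcongr
    -- `8` is twice the constant of `hpt`, and `9 = 3 ^ 2` is the first square beyond it
    have h5 : 2 * S ^ 2 < 2 * S ^ 2 := by
      calc 2 * S ^ 2 < 2 * (4 * A x + 4 * B x ^ 2) := by
            apply (ENNReal.mul_lt_mul_iff_right two_ne_zero ENNReal.ofNat_ne_top).2 hx'
        _ = 8 * A x + 8 * B x ^ 2 := by ring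
        _ ≤ S ^ 2 + 9 * B x ^ 2 := by
            gcongr
            norm_num
        _ ≤ S ^ 2 + S ^ 2 := by gcongr
        _ = _ := by ring
    exact lt_irrefl _ h5
  have hgood : S * volume {x | S ^ 2 ≤ 8 * A x} ≤
      8 * (wC n * ((orthC n * ∑' k, dec α k + 1) * 2 ^ n)) * ∫⁻ z, ‖f z‖ₑ := by
    rw [← ENNReal.mul_le_mul_iff_right hS0 hSt]
    calc S * (S * volume {x | S ^ 2 ≤ 8 * A x}) = S ^ 2 * volume {x | S ^ 2 ≤ 8 * A x} := by ring
      _ ≤ _ := meas_good_le hn hα hα1 hψ hg hg2 (S ^ 2)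
      _ ≤ 8 * (wC n * ((orthC n * ∑' k, dec α k + 1) * (2 ^ n * S * ∫⁻ z, ‖f z‖ₑ))) := by
          gcongr
          apply (ENNReal.ofReal_le_ofReal hgs).trans
          rw [ENNReal.ofReal_mul (by positivity), ENNReal.ofReal_mul (by positivity), hF,
            ENNReal.ofReal_pow zero_le_two, ENNReal.ofReal_ofNat]
      _ = _ := by ring
  have hhalo := meas_halo_le hπ hs hπ3
  have hbad := meas_bad_le (f := f) hn hα hα1 hψ hb hπ hπ1 (m := m) hb0 hb1 S
  calc _ ≤ S * (volume {x | S ^ 2 ≤ 8 * A x} + (volume (⋃ Q, halo π m Q) +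
        volume ({x | S ≤ 3 * B x} ∩ (⋃ Q, halo π m Q)ᶜ))) := by
        apply mul_le_mul' le_rfl
        apply (measure_mono hsub).trans
        apply (measure_union_le _ _).trans
        exact add_le_add le_rfl (measure_union_le _ _)
    _ ≤ 8 * (wC n * ((orthC n * ∑' k, dec α k + 1) * 2 ^ n)) * (∫⁻ z, ‖f z‖ₑ) +
        (haloC n * (∫⁻ z, ‖f z‖ₑ) + 6 * badC n α * ∫⁻ z, ‖f z‖ₑ) := by
        rw [mul_add, mul_add]
        exact add_le_add hgood (add_le_add hhalo hbad)
    _ = _ := by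
        rw [weakC]
        ring

/-- The weak type estimate for the full discrete square function. -/
theorem weak_discrete {n : ℕ} (hn : 0 < n) {α : ℝ} (hα : 0 < α) (hα1 : α ≤ 1)
    {ψ : ℤ × (Fin n → ℤ) → Rn n → ℝ} (hψ : ∀ q, IsBump α q.1 (pt q.1 q.2) (ψ q))
    {f : Rn n → ℝ} (hf : Integrable f) {s : ℝ} (hs : 0 < s) :
    ENNReal.ofReal s * volume {x | ENNReal.ofReal s ^ 2 < ∑' q : ℤ × (Fin n → ℤ),
          wt q.1 (pt q.1 q.2) x ^ 2 * ‖∫ z, ψ q z * f z‖ₑ ^ 2} ≤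
      weakC n α * ∫⁻ z, ‖f z‖ₑ := by
  set D : ℕ → Set (Rn n) := fun N => {x | ENNReal.ofReal s ^ 2 < ∑' q : ℤ × (Fin n → ℤ),
        (Ici (-(N : ℤ))).indicator (fun _ => 1) q.1 *
          (wt q.1 (pt q.1 q.2) x ^ 2 * ‖∫ z, ψ q z * f z‖ₑ ^ 2)} with hD
  have hmono : Monotone D := by
    intro N N' hN x hx
    refine lt_of_lt_of_le (mem_ofPred_eq ▸ hx : ENNReal.ofReal s ^ 2 < _) ?_
    apply ENNReal.tsum_le_tsum
    intro q
    apply mul_le_mul' _ le_rfl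
    apply indicator_le_indicator_of_subset _ (fun _ => zero_le)
    apply Ici_subset_Ici.2
    lia
  have hsub : {x | ENNReal.ofReal s ^ 2 < ∑' q : ℤ × (Fin n → ℤ),
      wt q.1 (pt q.1 q.2) x ^ 2 * ‖∫ z, ψ q z * f z‖ₑ ^ 2} ⊆ ⋃ N, D N := by
    intro x hx
    rw [mem_ofPred_eq, ENNReal.tsum_eq_iSup_sum, lt_iSup_iff] at hx
    obtain ⟨J, hJ⟩ := hx
    rw [mem_iUnion]
    refine ⟨J.sup fun q => q.1.natAbs, hJ.trans_le ?_⟩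
    apply le_trans _ (ENNReal.sum_le_tsum J)
    apply Finset.sum_le_sum
    intro q hq
    have h1 : q.1.natAbs ≤ J.sup fun q => q.1.natAbs :=
      Finset.le_sup (f := fun q : ℤ × (Fin n → ℤ) => q.1.natAbs) hq
    have h2 : q.1 ∈ Ici (-((J.sup fun q => q.1.natAbs : ℕ) : ℤ)) := by
      rw [mem_Ici]
      lia
    rw [indicator_of_mem h2, one_mul]
  apply (mul_le_mul' le_rfl (measure_mono hsub)).trans
  rw [hmono.measure_iUnion, ENNReal.mul_iSup]
  exact iSup_le fun N => weak_trunc hn hα hα1 hψ hf hs _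

/-- **Theorem 5.1.** Let `0 < α ≤ 1` and `λ > (3n + 2α)/n`.  Then `g^*_{λ,α}` is of weak
type `(1,1)`: `|{x : g^*_{λ,α}(f)(x) > σ}| ≤ (C/σ) ∫ |f|`. -/
theorem gstar_weak11
    (n : ℕ) (hn : 0 < n) (α lam : ℝ) (hα0 : 0 < α) (hα1 : α ≤ 1)
    (hlam : (3 * n + 2 * α) / n < lam) :
    ∃ C : ℝ, 0 < C ∧ ∀ f : Rn n → ℝ, Integrable f volume → ∀ σ : ℝ, 0 < σ →
      (volume {x : Rn n | σ < gstarAlpha α lam f x}).toReal ≤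
        C / σ * ∫ x, |f x| := by
  have hD := discC_pos n
  refine ⟨Real.sqrt (discC n) * (weakC n α).toReal + 1, by positivity, ?_⟩
  intro f hf σ hσ
  choose ψ hψ hψA using exists_bump hn hα0 hα1 hf
  set s : ℝ := σ / Real.sqrt (discC n) with hs
  have hs0 : 0 < s := by positivity
  have hS0 : ENNReal.ofReal s ≠ 0 := by simpa using hs0
  have hs2 : ENNReal.ofReal (σ ^ 2 / discC n) = ENNReal.ofReal s ^ 2 := by
    rw [← ENNReal.ofReal_pow hs0.le, hs, div_pow, Real.sq_sqrt hD.le]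
  have hsub : {x : Rn n | σ < gstarAlpha α lam f x} ⊆ {x | ENNReal.ofReal s ^ 2 <
      ∑' q : ℤ × (Fin n → ℤ), wt q.1 (pt q.1 q.2) x ^ 2 * ‖∫ z, ψ q z * f z‖ₑ ^ 2} := by
    intro x hx
    have h := lt_gstar hn hα0 hlam hψA hσ hx
    rw [hs2] at h
    exact h
  have hF : ∫⁻ z, ‖f z‖ₑ = ENNReal.ofReal (∫ z, |f z|) := by
    simp_rw [← Real.norm_eq_abs]
    exact (ofReal_integral_norm_eq_lintegral_enorm hf).symm
  have hF0 : 0 ≤ ∫ z, |f z| := integral_nonneg fun _ => abs_nonneg _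
  have hmain : ENNReal.ofReal s * volume {x : Rn n | σ < gstarAlpha α lam f x} ≤
      ENNReal.ofReal ((weakC n α).toReal * ∫ z, |f z|) := by
    apply (mul_le_mul' le_rfl (measure_mono hsub)).trans
    apply (weak_discrete hn hα0 hα1 hψ hf hs0).trans
    rw [ENNReal.ofReal_mul ENNReal.toReal_nonneg, ENNReal.ofReal_toReal (weakC_ne_top hn hα0), hF]
  have hreal := ENNReal.toReal_le_of_le_ofReal (by positivity) hmain
  rw [ENNReal.toReal_mul, ENNReal.toReal_ofReal hs0.le, ← le_div_iff₀' hs0] at hreal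
  apply hreal.trans
  have hq := Real.sqrt_pos.2 hD
  have e : (weakC n α).toReal * (∫ z, |f z|) / s =
      Real.sqrt (discC n) * (weakC n α).toReal / σ * ∫ z, |f z| := by
    rw [hs]
    field_simp
  rw [e]
  gcongr
  linarith
end
end

section
/- Let 0 < α ≤ 1 and j ∈ ℤ_+. There exists a constant C > 0 such that the following holds: if Q ⊂ ℝⁿ is a cube with center c and h ∈ L¹(ℝⁿ) is supported in Q with ∫_Q h(x) dx = 0, then for every x outside the concentric dilated cube Q* = 2√n·Q, S_{α,2^j}(h)(x) ≤ C · 2^{j(3n+2α)/2} · (|Q|^{α/n} / |x − c|^{n+α}) · ∫_Q |h(z)| dz, where |Q| denotes the Lebesgue measure of Q. -/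
/-!
The estimate combines two facts about `A_α(h)(y,t)`, with `a = n + α` and `I = ∫ |h|`.

* Since `∫ h = 0`, the value of the test function at the center `c` may be subtracted inside the
  integral; the Hölder condition and `|z - c| ≤ √n ℓ / 2` on `Q` then give
  `A_α(h)(y,t) ≤ (√n ℓ / 2) ^ α I t ^ (-a)` (`Aalpha_le_of_cancel`).
* If `A_α(h)(y,t) ≠ 0`, some `z ∈ Q` has `|y - z| ≤ t` (`Aalpha_eq_zero`). When also
  `|x - y| < 2 ^ j t` and `x ∉ Q*`, so that `|z - c| ≤ |x - c| / 2`, this forces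
  `t > T := |x - c| / (4 · 2 ^ j)`.

Integrating the square of the bound over the part of the cone above height `T`, whose slice at
height `t` has measure `|B(0,1)| (2 ^ j t) ^ n`, leaves a multiple of
`2 ^ (j n) ∫_T^∞ t ^ (-2 a - 1) dt` (`lintegral_truncated_cone`), and the square root produces the
power `2 ^ (j n / 2) · 2 ^ (j a) = 2 ^ (j (3 n + 2 α) / 2)`.
-/


open MeasureTheory Metric Set

noncomputable section

lemma Calpha.continuous {n : ℕ} {α : ℝ} (hα0 : 0 < α) {φ : Rn n → ℝ} (hφ : φ ∈ Calpha n α) :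
    Continuous φ := by
  rw [continuous_iff_continuousAt]
  intro x
  rw [ContinuousAt, tendsto_iff_dist_tendsto_zero]
  refine squeeze_zero (fun _ => dist_nonneg)
    (fun y => (Real.dist_eq (φ y) (φ x)).trans_le (hφ.2.2 y x)) ?_
  have hc : Continuous fun y : Rn n => ‖y - x‖ ^ α :=
    (continuous_id.sub continuous_const).norm.rpow_const fun _ => Or.inr hα0.le
  simpa [Real.zero_rpow hα0.ne'] using hc.tendsto x

lemma Calpha.abs_le {n : ℕ} {α : ℝ} (hα0 : 0 < α) {φ : Rn n → ℝ} (hφ : φ ∈ Calpha n α)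
    (x : Rn n) : |φ x| ≤ |φ 0| + 1 := by
  by_cases hx : 1 < ‖x‖
  · rw [hφ.1 x hx, abs_zero]
    positivity
  · have h1 := hφ.2.2 x 0
    rw [sub_zero] at h1
    have h2 : ‖x‖ ^ α ≤ 1 := Real.rpow_le_one (norm_nonneg _) (not_lt.1 hx) hα0.le
    have h3 := abs_sub_abs_le_abs_sub (φ x) (φ 0)
    linarith

lemma Aalpha_nonneg {n : ℕ} (α : ℝ) (f : Rn n → ℝ) (y : Rn n) (t : ℝ) : 0 ≤ Aalpha α f y t :=
  Real.iSup_nonneg fun _ => Real.iSup_nonneg fun _ => abs_nonneg _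

lemma Aalpha_le {n : ℕ} {α : ℝ} {f : Rn n → ℝ} {y : Rn n} {t M : ℝ} (hM : 0 ≤ M)
    (H : ∀ φ ∈ Calpha n α, |∫ z, (t ^ n)⁻¹ * φ (t⁻¹ • (y - z)) * f z| ≤ M) :
    Aalpha α f y t ≤ M :=
  Real.iSup_le (fun φ => Real.iSup_le (fun hφ => H φ hφ) hM) hM

/-- Size estimate: the cancellation of `h` gains a factor `(R / t) ^ α` from the Hölder
condition on the test functions. -/
lemma Aalpha_le_of_cancel {n : ℕ} {α : ℝ} (hα0 : 0 < α) {h : Rn n → ℝ}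
    (hint : Integrable h volume) (hz : (∫ x, h x) = 0) {c : Rn n} {R : ℝ} (hR : 0 ≤ R)
    (hsupp : ∀ z, R < ‖z - c‖ → h z = 0) (y : Rn n) {t : ℝ} (ht : 0 < t) :
    Aalpha α h y t ≤ (t ^ n)⁻¹ * (R / t) ^ α * ∫ z, |h z| := by
  refine Aalpha_le (by positivity) fun φ hφ => ?_
  have hc := Calpha.continuous hα0 hφ
  have hc' : Continuous fun z : Rn n => (t ^ n)⁻¹ * φ (t⁻¹ • (y - z)) := by fun_prop
  have hi : Integrable (fun z => (t ^ n)⁻¹ * φ (t⁻¹ • (y - z)) * h z) := by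
    refine hint.bdd_mul (c := (t ^ n)⁻¹ * (|φ 0| + 1)) hc'.aestronglyMeasurable
      (Filter.Eventually.of_forall fun z => ?_)
    rw [norm_mul, Real.norm_of_nonneg (by positivity : 0 ≤ (t ^ n)⁻¹), Real.norm_eq_abs]
    exact mul_le_mul_of_nonneg_left (Calpha.abs_le hα0 hφ _) (by positivity)
  have heq : (∫ z, (t ^ n)⁻¹ * φ (t⁻¹ • (y - z)) * h z)
      = ∫ z, (t ^ n)⁻¹ * (φ (t⁻¹ • (y - z)) - φ (t⁻¹ • (y - c))) * h z := by
    have h1 : (∫ z, (t ^ n)⁻¹ * φ (t⁻¹ • (y - c)) * h z) = 0 := by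
      rw [integral_const_mul, hz, mul_zero]
    rw [← sub_zero (∫ z, (t ^ n)⁻¹ * φ (t⁻¹ • (y - z)) * h z), ← h1,
      ← integral_sub hi (hint.const_mul _)]
    congr 1
    ext z
    ring
  rw [heq, ← Real.norm_eq_abs, ← integral_const_mul]
  refine norm_integral_le_of_norm_le (hint.abs.const_mul _)
    (Filter.Eventually.of_forall fun z => ?_)
  rw [norm_mul, norm_mul, Real.norm_of_nonneg (by positivity : 0 ≤ (t ^ n)⁻¹), Real.norm_eq_abs,
    Real.norm_eq_abs]
  by_cases hzR : R < ‖z - c‖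
  · simp [hsupp z hzR]
  · have h2 := hφ.2.2 (t⁻¹ • (y - z)) (t⁻¹ • (y - c))
    have h3 : ‖t⁻¹ • (y - z) - t⁻¹ • (y - c)‖ = ‖z - c‖ / t := by
      rw [← smul_sub, sub_sub_sub_cancel_left, norm_smul, Real.norm_of_nonneg (by positivity),
        norm_sub_rev]
      ring
    rw [h3] at h2
    have h4 : (‖z - c‖ / t) ^ α ≤ (R / t) ^ α := by
      refine Real.rpow_le_rpow (by positivity) ?_ hα0.le
      exact div_le_div_of_nonneg_right (not_lt.1 hzR) ht.le
    gcongr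
    exact h2.trans h4

/-- Localization: `A_α(h)(y,t)` vanishes as soon as `B(y,t)` misses the support of `h`. -/
lemma Aalpha_eq_zero {n : ℕ} {α : ℝ} {h : Rn n → ℝ} {y : Rn n} {t : ℝ} (ht : 0 < t)
    (H : ∀ z, ‖y - z‖ ≤ t → h z = 0) : Aalpha α h y t = 0 := by
  refine le_antisymm (Aalpha_le le_rfl fun φ hφ => ?_) (Aalpha_nonneg _ _ _ _)
  have h0 : ∀ z, (t ^ n)⁻¹ * φ (t⁻¹ • (y - z)) * h z = 0 := fun z => by
    by_cases hzt : ‖y - z‖ ≤ t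
    · rw [H z hzt, mul_zero]
    · have h1 : 1 < ‖t⁻¹ • (y - z)‖ := by
        rw [norm_smul, Real.norm_of_nonneg (by positivity), inv_mul_eq_div, one_lt_div ht]
        exact not_le.1 hzt
      rw [hφ.1 _ h1, mul_zero, zero_mul]
  simp [h0]

/-- The part of the cone `Γ_β(x)` above height `T`, integrated against a power of `t` with the
exponent that produces `∫_T^∞ t ^ (-s - 1) dt = T ^ (-s) / s` after integrating out `y`. -/
lemma lintegral_truncated_cone {n : ℕ} (x : Rn n) {K β T s : ℝ} (hK : 0 ≤ K) (hβ : 0 < β)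
    (hT : 0 < T) (hs : 0 < s) :
    (∫⁻ p : Rn n × ℝ, {p : Rn n × ℝ | T < p.2 ∧ dist x p.1 < β * p.2}.indicator
        (fun p => ENNReal.ofReal (K * p.2 ^ (-s - 1) / p.2 ^ n)) p)
      = ENNReal.ofReal (K * (volume (ball (0 : Rn n) 1)).toReal * β ^ n * (T ^ (-s) / s)) := by
  have hm : MeasurableSet {p : Rn n × ℝ | T < p.2 ∧ dist x p.1 < β * p.2} := by
    have h1 : Measurable fun p : Rn n × ℝ => dist x p.1 := by fun_prop
    have h2 : Measurable fun p : Rn n × ℝ => β * p.2 := by fun_prop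
    exact (measurableSet_lt measurable_const measurable_snd).inter (measurableSet_lt h1 h2)
  have hmf : Measurable fun p : Rn n × ℝ => ENNReal.ofReal (K * p.2 ^ (-s - 1) / p.2 ^ n) := by
    fun_prop
  set v := (volume (ball (0 : Rn n) 1)).toReal with hv
  have hv' : volume (ball (0 : Rn n) 1) = ENNReal.ofReal v :=
    (ENNReal.ofReal_toReal measure_ball_lt_top.ne).symm
  have hv0 : 0 ≤ v := ENNReal.toReal_nonneg
  rw [Measure.volume_eq_prod, lintegral_prod_symm _ (hmf.indicator hm).aemeasurable]
  have hin : ∀ t : ℝ, (∫⁻ y : Rn n, {p : Rn n × ℝ | T < p.2 ∧ dist x p.1 < β * p.2}.indicator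
        (fun p => ENNReal.ofReal (K * p.2 ^ (-s - 1) / p.2 ^ n)) (y, t))
      = (Ioi T).indicator (fun t => ENNReal.ofReal (K * v * β ^ n * t ^ (-s - 1))) t := by
    intro t
    by_cases ht : T < t
    · have ht0 : 0 < t := hT.trans ht
      have h1 : ∀ y : Rn n, {p : Rn n × ℝ | T < p.2 ∧ dist x p.1 < β * p.2}.indicator
          (fun p => ENNReal.ofReal (K * p.2 ^ (-s - 1) / p.2 ^ n)) (y, t)
          = (ball x (β * t)).indicator
            (fun _ => ENNReal.ofReal (K * t ^ (-s - 1) / t ^ n)) y := by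
        intro y
        simp [indicator, ht, dist_comm x y]
      simp_rw [h1]
      rw [lintegral_indicator_const measurableSet_ball, Measure.addHaar_ball_of_pos _ _ (by positivity),
        hv', indicator_of_mem (mem_Ioi.2 ht), ← ENNReal.ofReal_mul (by positivity),
        ← ENNReal.ofReal_mul (by positivity), finrank_euclideanSpace_fin]
      congr 1
      rw [mul_pow]
      field_simp
    · simp [indicator, ht]
  simp_rw [hin]
  rw [lintegral_indicator measurableSet_Ioi, ← ofReal_integral_eq_lintegral_ofReal]
  · rw [integral_const_mul, integral_Ioi_rpow_of_lt (by linarith) hT]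
    congr 2
    rw [sub_add_cancel, neg_div_neg_eq]
  · exact (integrableOn_Ioi_rpow_of_lt (by linarith) hT).const_mul _
  · refine (ae_restrict_mem measurableSet_Ioi).mono fun t ht => ?_
    have : 0 < t := hT.trans ht
    simp only [Pi.zero_apply]
    positivity

/-- Square function estimate at `x` from a decay bound `A_α(f)(y,t) ≤ M t ^ (-a)`, when
`A_α(f)` vanishes on the part of the cone below height `T`. -/
lemma Salpha_le {n : ℕ} {α β M T a : ℝ} {f : Rn n → ℝ} {x : Rn n} (hβ : 0 < β)
    (hT : 0 < T) (ha : 0 < a)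
    (hzero : ∀ y t, 0 < t → dist x y < β * t → t ≤ T → Aalpha α f y t = 0)
    (hle : ∀ y t, 0 < t → Aalpha α f y t ≤ M * t ^ (-a)) :
    Salpha α β f x ≤ √(M ^ 2 * (volume (ball (0 : Rn n) 1)).toReal * β ^ n *
      (T ^ (-(2 * a)) / (2 * a))) := by
  refine Real.sqrt_le_sqrt ?_
  have hm : MeasurableSet {p : Rn n × ℝ | 0 < p.2 ∧ dist x p.1 < β * p.2} := by
    have h1 : Measurable fun p : Rn n × ℝ => dist x p.1 := by fun_prop
    have h2 : Measurable fun p : Rn n × ℝ => β * p.2 := by fun_prop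
    exact (measurableSet_lt measurable_const measurable_snd).inter (measurableSet_lt h1 h2)
  -- Measurability of `Aalpha α f`, a supremum over an uncountable family, is not needed here:
  -- `norm_integral_le_lintegral_norm` holds for every function.
  refine (Real.le_norm_self _).trans ((norm_integral_le_lintegral_norm _).trans ?_)
  refine ENNReal.toReal_le_of_le_ofReal (by positivity) ?_
  rw [← lintegral_truncated_cone x (sq_nonneg M) hβ hT (by positivity : 0 < 2 * a),
    ← lintegral_indicator hm]
  refine lintegral_mono fun p => ?_
  obtain ⟨y, t⟩ := p
  by_cases hp : 0 < t ∧ dist x y < β * t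
  · have hp' : (y, t) ∈ {p : Rn n × ℝ | 0 < p.2 ∧ dist x p.1 < β * p.2} := hp
    rw [indicator_of_mem hp']
    obtain ⟨ht, hd⟩ := hp
    by_cases hTt : T < t
    · have hp2 : (y, t) ∈ {p : Rn n × ℝ | T < p.2 ∧ dist x p.1 < β * p.2} := ⟨hTt, hd⟩
      rw [indicator_of_mem hp2]
      refine ENNReal.ofReal_le_ofReal ?_
      simp only
      rw [Real.norm_of_nonneg (by positivity)]
      have h1 : Aalpha α f y t ^ 2 ≤ (M * t ^ (-a)) ^ 2 :=
        pow_le_pow_left₀ (Aalpha_nonneg _ _ _ _) (hle y t ht) 2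
      have h2 : t ^ (-(2 * a) - 1) = (t ^ (-a)) ^ 2 / t := by
        rw [Real.rpow_sub ht, Real.rpow_one, ← Real.rpow_natCast (t ^ (-a)) 2,
          ← Real.rpow_mul ht.le]
        congr 2
        push_cast
        ring
      rw [h2]
      calc Aalpha α f y t ^ 2 / t ^ (n + 1) ≤ (M * t ^ (-a)) ^ 2 / t ^ (n + 1) := by gcongr
        _ = M ^ 2 * ((t ^ (-a)) ^ 2 / t) / t ^ n := by
          field_simp
          ring
    · simp [hzero y t ht hd (not_lt.1 hTt)]
  · have hp' : (y, t) ∉ {p : Rn n × ℝ | 0 < p.2 ∧ dist x p.1 < β * p.2} := hp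
    rw [indicator_of_notMem hp']
    exact zero_le

/-- A cube of side `ℓ` lies in the ball with the same center and radius `√n ℓ / 2`. -/
lemma norm_sub_le_of_mem_cube {n : ℕ} {z c : Rn n} {ℓ : ℝ} (hℓ : 0 < ℓ)
    (hz : ∀ i, |z i - c i| ≤ ℓ / 2) : ‖z - c‖ ≤ √n * ℓ / 2 := by
  rw [EuclideanSpace.norm_eq]
  have h1 : ∑ i, ‖(z - c) i‖ ^ 2 ≤ ∑ _i : Fin n, (ℓ / 2) ^ 2 :=
    Finset.sum_le_sum fun i _ => pow_le_pow_left₀ (norm_nonneg _) (by simpa using hz i) 2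
  refine (Real.sqrt_le_sqrt h1).trans (le_of_eq ?_)
  rw [Finset.sum_const, Finset.card_univ, Fintype.card_fin, nsmul_eq_mul,
    Real.sqrt_mul (by positivity), Real.sqrt_sq (by positivity)]
  ring

/-- **Atomic estimate in the proof of Theorem 5.1.** Let `0 < α ≤ 1` and `j ∈ ℤ₊`.  If `h`
is integrable, supported in the cube `Q` with center `c` and side length `ℓ`, and has
vanishing integral, then for `x ∉ Q* = 2√n Q`,
`S_{α,2ʲ}(h)(x) ≤ C 2^{j(3n+2α)/2} |Q|^{α/n} |x-c|^{-(n+α)} ∫_Q |h|`. -/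
theorem salpha_aperture_atom_estimate
    (n : ℕ) (hn : 0 < n) (α : ℝ) (hα0 : 0 < α) (hα1 : α ≤ 1) :
    ∃ C : ℝ, 0 < C ∧ ∀ j : ℕ, 1 ≤ j → ∀ (c : Rn n) (ℓ : ℝ), 0 < ℓ →
      ∀ h : Rn n → ℝ, Integrable h volume →
        (∀ x : Rn n, x ∉ {x : Rn n | ∀ i, |x i - c i| ≤ ℓ / 2} → h x = 0) →
        ((∫ x, h x) = 0) →
        ∀ x : Rn n, x ∉ {x : Rn n | ∀ i, |x i - c i| ≤ Real.sqrt n * ℓ} →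
          Salpha α (2 ^ j) h x ≤
            C * 2 ^ ((j : ℝ) * (3 * n + 2 * α) / 2) *
              ((ℓ ^ n) ^ (α / n) / dist x c ^ ((n : ℝ) + α)) *
              ∫ z in {x : Rn n | ∀ i, |x i - c i| ≤ ℓ / 2}, |h z| := by
  have hn' : (0 : ℝ) < n := by exact_mod_cast hn
  have ha : 0 < (n : ℝ) + α := by positivity
  set v := (volume (ball (0 : Rn n) 1)).toReal
  have hv0 : 0 < v := ENNReal.toReal_pos (measure_ball_pos _ _ one_pos).ne' measure_ball_lt_top.ne
  refine ⟨√(v / (2 * (n + α))) * (√n / 2) ^ α * 4 ^ ((n : ℝ) + α), by positivity, ?_⟩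
  intro j _ c ℓ hℓ h hint hsupp hz x hx
  set r := dist x c with hr
  -- Outside `Q*`, the distance to `c` exceeds twice the radius of a ball containing `Q`.
  have hrℓ : √n * ℓ < r := by
    simp only [mem_ofPred_eq, not_forall, not_le] at hx
    obtain ⟨i, hi⟩ := hx
    refine hi.trans_le ?_
    simpa [hr, dist_eq_norm] using PiLp.norm_apply_le (x - c) i
  have hr0 : 0 < r := lt_trans (by positivity) hrℓ
  have hsupp' : ∀ z, √n * ℓ / 2 < ‖z - c‖ → h z = 0 := fun z hzc =>
    hsupp z fun hzQ => absurd (norm_sub_le_of_mem_cube hℓ hzQ) (not_le.2 hzc)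
  have hI : (∫ z in {x : Rn n | ∀ i, |x i - c i| ≤ ℓ / 2}, |h z|) = ∫ z, |h z| :=
    setIntegral_eq_integral_of_forall_compl_eq_zero fun z hzQ => by rw [hsupp z hzQ, abs_zero]
  rw [hI]
  set I := ∫ z, |h z|
  have hI0 : 0 ≤ I := integral_nonneg fun _ => abs_nonneg _
  have hβ1 : (1 : ℝ) ≤ 2 ^ j := one_le_pow₀ one_le_two
  have hβ0 : (0 : ℝ) < 2 ^ j := by positivity
  have key := Salpha_le (α := α) (β := 2 ^ j) (M := (√n * ℓ / 2) ^ α * I)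
    (T := r / (4 * 2 ^ j)) (a := n + α) (f := h) (x := x) hβ0 (by positivity) ha
    (by
      intro y t ht hd htT
      refine Aalpha_eq_zero ht fun z hzt => hsupp' z ?_
      have h1 : r ≤ dist x y + ‖y - z‖ + ‖z - c‖ := by
        rw [hr, ← dist_eq_norm, ← dist_eq_norm]
        exact dist_triangle4 x y z c
      have h2 : t * (4 * 2 ^ j) ≤ r := (le_div_iff₀ (by positivity)).1 htT
      have h3 : t ≤ 2 ^ j * t := le_mul_of_one_le_left ht.le hβ1
      linarith)
    (by
      intro y t ht
      refine (Aalpha_le_of_cancel hα0 hint hz (by positivity) hsupp' y ht).trans (le_of_eq ?_)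
      change _ * I = _
      rw [Real.div_rpow (by positivity) ht.le, Real.rpow_neg ht.le, Real.rpow_add ht,
        Real.rpow_natCast]
      field_simp)
  refine key.trans (le_of_eq ?_)
  have e1 : (ℓ ^ n) ^ (α / n) = ℓ ^ α := by
    rw [← Real.rpow_natCast, ← Real.rpow_mul hℓ.le]
    congr 1
    field_simp
  have e2 : (√n * ℓ / 2) ^ α = (√n / 2) ^ α * ℓ ^ α := by
    rw [← Real.mul_rpow (by positivity) hℓ.le]
    congr 1
    ring
  have e3 : (r / (4 * 2 ^ j)) ^ (-(2 * ((n : ℝ) + α)))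
      = (4 ^ ((n : ℝ) + α) * 2 ^ ((j : ℝ) * (n + α)) / r ^ ((n : ℝ) + α)) ^ 2 := by
    have : (2 : ℝ) ^ ((j : ℝ) * (n + α)) = (2 ^ j) ^ ((n : ℝ) + α) := by
      rw [Real.rpow_mul zero_le_two, Real.rpow_natCast]
    rw [this, ← Real.mul_rpow (by positivity) (by positivity),
      ← Real.div_rpow (by positivity) (by positivity), Real.rpow_neg (by positivity),
      ← Real.inv_rpow (by positivity), inv_div, mul_comm (2 : ℝ), Real.rpow_mul (by positivity),
      Real.rpow_two]
  have e4 : ((2 : ℝ) ^ j) ^ n = (2 ^ ((j : ℝ) * n / 2)) ^ 2 := by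
    rw [← Real.rpow_two, ← Real.rpow_mul zero_le_two, ← Real.rpow_natCast, ← Real.rpow_natCast,
      ← Real.rpow_mul zero_le_two]
    congr 1
    ring
  have e5 : (2 : ℝ) ^ ((j : ℝ) * (3 * n + 2 * α) / 2)
      = 2 ^ ((j : ℝ) * n / 2) * 2 ^ ((j : ℝ) * (n + α)) := by
    rw [← Real.rpow_add two_pos]
    congr 1
    ring
  rw [e1, e2, e3, e4, e5]
  have e6 : ((√n / 2) ^ α * ℓ ^ α * I) ^ 2 * v * (2 ^ ((j : ℝ) * n / 2)) ^ 2 *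
      ((4 ^ ((n : ℝ) + α) * 2 ^ ((j : ℝ) * (n + α)) / r ^ ((n : ℝ) + α)) ^ 2 / (2 * (n + α)))
      = v / (2 * (n + α)) * ((√n / 2) ^ α * ℓ ^ α * I * 2 ^ ((j : ℝ) * n / 2) *
        (4 ^ ((n : ℝ) + α) * 2 ^ ((j : ℝ) * (n + α)) / r ^ ((n : ℝ) + α))) ^ 2 := by
    ring
  rw [e6, Real.sqrt_mul (by positivity), Real.sqrt_sq (by positivity)]
  ring
end
end
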